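/- Let A = (A₁,…,Aₙ) be a reduced and irreducible tuple of finite subsets of ℤⁿ. Then the monodromy group G_A is doubly transitive: there exists a proper algebraic subset B ⊊ ℂ^A over whose complement the projection π : {(x,f) ∈ (ℂ∖{0})ⁿ × ℂ^A : f(x) = 0} → ℂ^A is a covering map, such that for every f ∈ ℂ^A ∖ B and any ordered pairs (x,y) and (x',y') of distinct roots of f, some loop γ in ℂ^A ∖ B based at f induces a permutation σ of the root set of f with σ(x) = x' and σ(y) = y'. -/

import Mathlib

open Pointwise MeasureTheory

namespace Esterov

/-- The standard embedding of the lattice `ℤⁿ` into `ℝⁿ`. -/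
def toR {n : ℕ} (a : Fin n → ℤ) : Fin n → ℝ := fun j => (a j : ℝ)

/-- The lattice mixed volume of finite sets `A₁, …, Aₙ ⊆ ℤⁿ`:
`MV(A₁,…,Aₙ) = ∑_{∅ ≠ S ⊆ {1,…,n}} (−1)^{n−|S|} vol (conv (∑_{i ∈ S} Aᵢ))`. -/
noncomputable def MV {n : ℕ} (A : Fin n → Finset (Fin n → ℤ)) : ℝ :=
  ∑ S ∈ Finset.univ.powerset.filter (fun S : Finset (Fin n) => S.Nonempty),
    (-1 : ℝ) ^ (n - S.card) *
      (volume (convexHull ℝ (∑ i ∈ S, toR '' (A i : Set (Fin n → ℤ))))).toReal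

/-- The complex torus `(ℂ∖0)ⁿ`. -/
abbrev Torus (n : ℕ) := Fin n → ℂˣ

/-- The index type of the coefficients of a tuple of supports. -/
abbrev CIdx {n : ℕ} (A : Fin n → Finset (Fin n → ℤ)) := Σ i : Fin n, {a : Fin n → ℤ // a ∈ A i}

/-- The space `ℂ^A = ℂ^{A₁} ⊕ ⋯ ⊕ ℂ^{Aₙ}` of systems of Laurent polynomials supported at `A`,
encoded by their coefficients. -/
abbrev Coeff {n : ℕ} (A : Fin n → Finset (Fin n → ℤ)) := CIdx A → ℂ

/-- The value of the Laurent monomial `x^a` at a point `x` of the torus. -/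
noncomputable def mono {n : ℕ} (a : Fin n → ℤ) (x : Torus n) : ℂ :=
  ∏ j, ((x j : ℂ) ^ (a j))

/-- The value of the `i`-th polynomial of the system `c ∈ ℂ^A` at `x`. -/
noncomputable def evalAt {n : ℕ} (A : Fin n → Finset (Fin n → ℤ)) (c : Coeff A) (i : Fin n)
    (x : Torus n) : ℂ :=
  ∑ a ∈ (A i).attach, c ⟨i, a⟩ * mono a.1 x

/-- `x` is a common root of the system `c ∈ ℂ^A`. -/
def IsRoot {n : ℕ} (A : Fin n → Finset (Fin n → ℤ)) (c : Coeff A) (x : Torus n) : Prop :=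
  ∀ i, evalAt A c i x = 0

/-- The Jacobian matrix `(∂fᵢ/∂xⱼ (x))` of the system `c ∈ ℂ^A` at `x`
(note `∂(x^a)/∂xⱼ = aⱼ x^a / xⱼ`). -/
noncomputable def jacobian {n : ℕ} (A : Fin n → Finset (Fin n → ℤ)) (c : Coeff A)
    (x : Torus n) : Matrix (Fin n) (Fin n) ℂ :=
  Matrix.of fun i j => (∑ a ∈ (A i).attach, c ⟨i, a⟩ * (a.1 j : ℂ) * mono a.1 x) * (x j : ℂ)⁻¹

/-- `x` is a singular root of the system `c`: a common root at which the Jacobian matrix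
is degenerate. -/
def IsSingularRoot {n : ℕ} (A : Fin n → Finset (Fin n → ℤ)) (c : Coeff A) (x : Torus n) :
    Prop :=
  IsRoot A c x ∧ (jacobian A c x).det = 0

/-- A subset of `ℂ^ι` is algebraic if it is the common zero locus of a family of polynomials. -/
def IsAlgebraicSet {ι : Type*} (Z : Set (ι → ℂ)) : Prop :=
  ∃ S : Set (MvPolynomial ι ℂ), Z = {c | ∀ p ∈ S, MvPolynomial.eval c p = 0}

/-- The Zariski closure of a subset of `ℂ^ι`. -/
def zclosure {ι : Type*} (Z : Set (ι → ℂ)) : Set (ι → ℂ) :=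
  ⋂₀ {W | IsAlgebraicSet W ∧ Z ⊆ W}

/-- The ideal of polynomials vanishing on a subset of `ℂ^ι`. -/
noncomputable def vanishingIdeal {ι : Type*} (Z : Set (ι → ℂ)) : Ideal (MvPolynomial ι ℂ) where
  carrier := {p | ∀ c ∈ Z, MvPolynomial.eval c p = 0}
  add_mem' := by
    intro p q hp hq c hc
    simp [hp c hc, hq c hc]
  zero_mem' := by
    intro c hc
    simp
  smul_mem' := by
    intro p q hq c hc
    simp [smul_eq_mul, hq c hc]

/-- The (complex) dimension of a subset of `ℂ^ι`, as the Krull dimension of the coordinate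
ring of its Zariski closure. -/
noncomputable def adim {ι : Type*} (Z : Set (ι → ℂ)) : WithBot ℕ∞ :=
  ringKrullDim (MvPolynomial ι ℂ ⧸ vanishingIdeal Z)

/-- The discriminant `D_A`: the Zariski closure of the set of systems having a singular root. -/
noncomputable def discSet {n : ℕ} (A : Fin n → Finset (Fin n → ℤ)) : Set (Coeff A) :=
  zclosure {c | ∃ x, IsSingularRoot A c x}

/-- The tuple `A` is dual effective: `D_A` is a hypersurface, i.e. has complex dimension
`dim ℂ^A − 1`. -/
def DualEffective {n : ℕ} (A : Fin n → Finset (Fin n → ℤ)) : Prop :=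
  adim (discSet A) = ((Fintype.card (CIdx A) - 1 : ℕ) : WithBot ℕ∞)

/-- The finite set `s` can be translated into the subgroup `L` of `ℤⁿ`. -/
def TranslatesInto {n : ℕ} (s : Finset (Fin n → ℤ)) (L : Submodule ℤ (Fin n → ℤ)) : Prop :=
  ∃ v : Fin n → ℤ, ∀ a ∈ s, a - v ∈ L

/-- A tuple of finite sets in `ℤⁿ` is reduced if the sets cannot all be translated into one
common proper subgroup of `ℤⁿ`. -/
def IsReducedTuple {n : ℕ} (A : Fin n → Finset (Fin n → ℤ)) : Prop :=
  ¬ ∃ L : Submodule ℤ (Fin n → ℤ), L ≠ ⊤ ∧ ∀ i, TranslatesInto (A i) L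

/-- A tuple of `n` finite sets in `ℤⁿ` is irreducible if for no `m` with `0 < m < n` can some
`n − m` of the sets be translated into one common subgroup of rank at most `n − m`. -/
def IsIrreducibleTuple {n : ℕ} (A : Fin n → Finset (Fin n → ℤ)) : Prop :=
  ¬ ∃ (I : Finset (Fin n)) (L : Submodule ℤ (Fin n → ℤ)),
      0 < I.card ∧ I.card < n ∧ Module.finrank ℤ L ≤ I.card ∧
      ∀ i ∈ I, TranslatesInto (A i) L

/-- The incidence variety `E = {(x, f) : f(x) = 0} ⊆ (ℂ∖0)ⁿ × ℂ^A`. -/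
def incidence {n : ℕ} (A : Fin n → Finset (Fin n → ℤ)) : Set (Torus n × Coeff A) :=
  {p | IsRoot A p.2 p.1}

/-- The projection `π : E → ℂ^A`. -/
def proj {n : ℕ} (A : Fin n → Finset (Fin n → ℤ)) : incidence A → Coeff A :=
  fun p => p.1.2

/-- The set of roots of the system `c`. -/
def RootSet {n : ℕ} (A : Fin n → Finset (Fin n → ℤ)) (c : Coeff A) :=
  {x : Torus n // IsRoot A c x}

/-- `γ` is a loop in `ℂ^A ∖ B` based at `f`. -/
def IsLoop {n : ℕ} (A : Fin n → Finset (Fin n → ℤ)) (B : Set (Coeff A)) (f : Coeff A)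
    (γ : unitInterval → Coeff A) : Prop :=
  Continuous γ ∧ (∀ t, γ t ∉ B) ∧ γ 0 = f ∧ γ 1 = f

/-- The loop `γ` based at `f` induces the permutation `σ` of the root set of `f` by path
lifting: for every root `x` the lift of `γ` starting at `x` ends at `σ x`. -/
def Induces {n : ℕ} (A : Fin n → Finset (Fin n → ℤ)) (γ : unitInterval → Coeff A)
    (f : Coeff A) (σ : RootSet A f → RootSet A f) : Prop :=
  ∀ x : RootSet A f, ∃ δ : unitInterval → Torus n,
    Continuous δ ∧ δ 0 = x.1 ∧ (∀ t, IsRoot A (γ t) (δ t)) ∧ δ 1 = (σ x).1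

/-!
Generically, the coefficients of the system are algebraically independent, and counting
transcendence degrees controls the roots: each equation, solved for one coefficient, expresses it
algebraically through the other coefficients and the root, and a pair of roots `x`, `y` allows two
coefficients to be eliminated from every polynomial whose support contains `a`, `b` with
`x^a y^b ≠ x^b y^a`. If `0 < m` supports contain no such `a`, `b`, then by reducedness and
irreducibility `x / y` is trivial on a lattice of rank greater than `m`. So `x` and `y` depend on
fewer than `2n - m` free coordinates, while `2n - m` coefficients are eliminated, contradicting
independence. Hence generically any two roots are separated by every support.

The same count shows that every Laurent monomial, evaluated at a root, satisfies a polynomial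
equation over the coefficient ring. So generically the roots stay in a compact part of the torus and
are nonsingular, and the projection, being proper and a local homeomorphism, is a covering over
the generic locus.

Given separated pairs `(x, y)` and `(x', y')` of roots of `f`, move `x` to `x'` and `y` to `y'`
along holomorphic curves and correct `f` by a combination of two fixed systems so that both points
remain roots. The correction is meromorphic in the parameter `s ∈ ℂ` and returns to `f` at `s = 1`.
Only countably many `s` are excluded, so some path from `0` to `1` avoids them and yields the loop.
-/

section LaurentMonomial

variable {ι : Type*} [Fintype ι]

/-- The Laurent monomial `x ^ a = ∏ⱼ xⱼ ^ aⱼ`. It is evaluated both at tuples of units and at tuples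
of elements of a field. -/
def laurentMonomial {M : Type*} [DivisionCommMonoid M] (a : ι → ℤ) (x : ι → M) : M :=
  ∏ j, x j ^ a j

section Group

variable {G H : Type*} [CommGroup G] [CommGroup H]

lemma laurentMonomial_zero (x : ι → G) : laurentMonomial 0 x = 1 := by
  simp [laurentMonomial]

lemma laurentMonomial_add (a b : ι → ℤ) (x : ι → G) :
    laurentMonomial (a + b) x = laurentMonomial a x * laurentMonomial b x := by
  simp [laurentMonomial, zpow_add, Finset.prod_mul_distrib]

lemma laurentMonomial_sub (a b : ι → ℤ) (x : ι → G) :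
    laurentMonomial (a - b) x = laurentMonomial a x / laurentMonomial b x := by
  simp [laurentMonomial, zpow_sub, ← div_eq_mul_inv, Finset.prod_div_distrib]

lemma laurentMonomial_zsmul (m : ℤ) (a : ι → ℤ) (x : ι → G) :
    laurentMonomial (m • a) x = laurentMonomial a x ^ m := by
  simp [laurentMonomial, mul_comm m, zpow_mul, Finset.prod_zpow]

lemma laurentMonomial_div (a : ι → ℤ) (x y : ι → G) :
    laurentMonomial a (x / y) = laurentMonomial a x / laurentMonomial a y := by
  simp [laurentMonomial, div_zpow, Finset.prod_div_distrib]

lemma laurentMonomial_single [DecidableEq ι] (j : ι) (x : ι → G) :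
    laurentMonomial (Pi.single j 1) x = x j := by
  rw [laurentMonomial, Finset.prod_eq_single j] <;> simp +contextual

lemma map_laurentMonomial (φ : G →* H) (a : ι → ℤ) (x : ι → G) :
    φ (laurentMonomial a x) = laurentMonomial a (φ ∘ x) := by
  simp [laurentMonomial, map_prod]

end Group

lemma coe_laurentMonomial {K : Type*} [Field K] (a : ι → ℤ) (x : ι → Kˣ) :
    ((laurentMonomial a x : Kˣ) : K) = laurentMonomial a fun j => (x j : K) := by
  simp [laurentMonomial]

lemma laurentMonomial_mem {K : Type*} [Field K] {F : Subfield K} {x : ι → K} (hx : ∀ j, x j ∈ F)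
    (a : ι → ℤ) : laurentMonomial a x ∈ F :=
  prod_mem fun j _ => zpow_mem (hx j) _

end LaurentMonomial

section ExponentLattice

variable {ι : Type*} [Fintype ι]

lemma exists_finset_zsmul_single_mem [DecidableEq ι] (L : Submodule ℤ (ι → ℤ)) :
    ∃ J : Finset ι, J.card + Module.finrank ℤ L ≤ Fintype.card ι ∧
      ∀ k, ∃ m : ℤ, m ≠ 0 ∧ m • Pi.single k (1 : ℤ) ∈
        L ⊔ Submodule.span ℤ ((fun j => Pi.single j (1 : ℤ)) '' (J : Set ι)) := by
  obtain ⟨I, hI, hmax⟩ :=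
    exists_maximal_linearIndepOn ℤ fun j => L.mkQ (Pi.single j (1 : ℤ))
  have : Fintype I := Fintype.ofFinite I
  refine ⟨I.toFinset, ?_, fun k => ?_⟩
  · have hcard : I.toFinset.card ≤ Module.finrank ℤ ((ι → ℤ) ⧸ L) := by
      simpa only [Set.toFinset_card] using LinearIndependent.fintype_card_le_finrank hI
    have hrank := L.finrank_quotient_add_finrank
    rw [Module.finrank_fintype_fun_eq_card] at hrank
    omega
  · obtain ⟨m, hm, hmem⟩ : ∃ m : ℤ, m ≠ 0 ∧ m • L.mkQ (Pi.single k 1) ∈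
        Submodule.span ℤ ((fun j => L.mkQ (Pi.single j (1 : ℤ))) '' I) := by
      by_cases hk : k ∈ I
      · exact ⟨1, one_ne_zero, by rw [one_smul]; exact Submodule.subset_span ⟨k, hk, rfl⟩⟩
      · exact hmax k hk
    refine ⟨m, hm, ?_⟩
    rwa [Set.coe_toFinset, ← Submodule.comap_map_mkQ, Submodule.mem_comap, map_smul,
      ← Submodule.span_image, Set.image_image]

variable {G : Type*} [CommGroup G]

/-- The lattice of the exponents `a` with `t ^ a ∈ H`. -/
def exponentLattice (t : ι → G) (H : Subgroup G) : Submodule ℤ (ι → ℤ) where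
  carrier := {a | laurentMonomial a t ∈ H}
  zero_mem' := by simp only [Set.mem_ofPred_eq, laurentMonomial_zero, one_mem]
  add_mem' := fun ha hb => by
    simpa only [Set.mem_ofPred_eq, laurentMonomial_add] using mul_mem ha hb
  smul_mem' := fun m _ ha => by
    simpa only [Set.mem_ofPred_eq, laurentMonomial_zsmul] using zpow_mem ha m

lemma mem_exponentLattice {t : ι → G} {H : Subgroup G} {a : ι → ℤ} :
    a ∈ exponentLattice t H ↔ laurentMonomial a t ∈ H :=
  Iff.rfl

lemma sub_mem_exponentLattice_bot {t : ι → G} {a b : ι → ℤ} :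
    a - b ∈ exponentLattice t ⊥ ↔ laurentMonomial a t = laurentMonomial b t := by
  rw [mem_exponentLattice, Subgroup.mem_bot, laurentMonomial_sub, div_eq_one]

lemma eq_one_of_exponentLattice_bot_eq_top {t : ι → G} (ht : exponentLattice t ⊥ = ⊤) :
    t = 1 := by
  classical
  funext j
  have hj : Pi.single j 1 ∈ exponentLattice t ⊥ := ht ▸ Submodule.mem_top
  rwa [mem_exponentLattice, Subgroup.mem_bot, laurentMonomial_single] at hj

lemma exists_finset_zpow_mem_closure (t : ι → G) :
    ∃ J : Finset ι,
      J.card + Module.finrank ℤ (exponentLattice t ⊥) ≤ Fintype.card ι ∧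
      ∀ k, ∃ m : ℤ, m ≠ 0 ∧ t k ^ m ∈ Subgroup.closure (t '' J) := by
  classical
  obtain ⟨J, hcard, hJ⟩ := exists_finset_zsmul_single_mem (exponentLattice t ⊥)
  refine ⟨J, hcard, fun k => ?_⟩
  obtain ⟨m, hm, hmem⟩ := hJ k
  have hle : exponentLattice t ⊥ ⊔ Submodule.span ℤ ((fun j => Pi.single j (1 : ℤ)) '' (J : Set ι))
      ≤ exponentLattice t (Subgroup.closure (t '' J)) := by
    refine sup_le (fun a ha => (bot_le : ⊥ ≤ Subgroup.closure (t '' J)) ha) ?_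
    rw [Submodule.span_le]
    rintro _ ⟨j, hj, rfl⟩
    rw [SetLike.mem_coe, mem_exponentLattice, laurentMonomial_single]
    exact Subgroup.subset_closure ⟨j, hj, rfl⟩
  have hpow := mem_exponentLattice.1 (hle hmem)
  rw [laurentMonomial_zsmul, laurentMonomial_single] at hpow
  exact ⟨m, hm, hpow⟩

end ExponentLattice

section Supports

variable {n : ℕ} {A : Fin n → Finset (Fin n → ℤ)}

lemma support_nonempty (hred : IsReducedTuple A) (hirr : IsIrreducibleTuple A) (i : Fin n) :
    (A i).Nonempty := by
  by_contra hempty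
  rw [Finset.not_nonempty_iff_eq_empty] at hempty
  have htrans : TranslatesInto (A i) ⊥ := ⟨0, by simp [hempty]⟩
  obtain rfl | hn : n = 1 ∨ 1 < n := by have := i.pos; omega
  · exact hred ⟨⊥, bot_ne_top, fun j => Subsingleton.elim i j ▸ htrans⟩
  · exact hirr ⟨{i}, ⊥, by simp, by simpa, by simp, by simpa⟩

variable {G : Type*} [CommGroup G]

open Classical in
/-- The indices `i` for which all monomials of `Aᵢ` take the same value at `t`. For a quotient
`t = x / y` of points, these are the supports that do not separate `x` from `y`. -/
noncomputable def constantIndices (A : Fin n → Finset (Fin n → ℤ)) (t : Fin n → G) :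
    Finset (Fin n) :=
  {i | ∀ a ∈ A i, ∀ b ∈ A i, laurentMonomial a t = laurentMonomial b t}

lemma mem_constantIndices {t : Fin n → G} {i : Fin n} :
    i ∈ constantIndices A t ↔
      ∀ a ∈ A i, ∀ b ∈ A i, laurentMonomial a t = laurentMonomial b t := by
  simp [constantIndices]

lemma translatesInto_exponentLattice_bot {t : Fin n → G} {i : Fin n} (hA : (A i).Nonempty)
    (hi : i ∈ constantIndices A t) : TranslatesInto (A i) (exponentLattice t ⊥) :=
  ⟨hA.choose, fun a ha =>
    sub_mem_exponentLattice_bot.2 (mem_constantIndices.1 hi a ha _ hA.choose_spec)⟩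

lemma exists_finset_card_add_card_constantIndices_lt (hred : IsReducedTuple A)
    (hirr : IsIrreducibleTuple A) {t : Fin n → G} (ht : t ≠ 1)
    (hconst : (constantIndices A t).Nonempty) :
    ∃ J : Finset (Fin n), J.card + (constantIndices A t).card < n ∧
      ∀ k, ∃ m : ℤ, m ≠ 0 ∧ t k ^ m ∈ Subgroup.closure (t '' J) := by
  have htrans : ∀ i ∈ constantIndices A t, TranslatesInto (A i) (exponentLattice t ⊥) :=
    fun i => translatesInto_exponentLattice_bot (support_nonempty hred hirr i)
  have hproper : constantIndices A t ≠ Finset.univ := fun huniv =>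
    hred ⟨exponentLattice t ⊥, fun htop => ht (eq_one_of_exponentLattice_bot_eq_top htop),
      fun i => htrans i (huniv ▸ Finset.mem_univ i)⟩
  have hcard : (constantIndices A t).card < n := by
    simpa only [Fintype.card_fin] using (Finset.card_lt_iff_ne_univ _).2 hproper
  have hrank : (constantIndices A t).card < Module.finrank ℤ (exponentLattice t ⊥) := by
    by_contra! hle
    exact hirr ⟨_, _, hconst.card_pos, hcard, hle, htrans⟩
  obtain ⟨J, hJ, hpow⟩ := exists_finset_zpow_mem_closure t
  rw [Fintype.card_fin] at hJ
  exact ⟨J, by omega, hpow⟩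

end Supports

section AlgebraicHull

variable (k : Type*) {K : Type*} [Field k] [Field K] [Algebra k K]

/-- The elements of `K` that are algebraic over `k[s]`, as a subfield: the closure of `s` in the
matroid of algebraic independence. -/
def algebraicHull (s : Set K) : Subfield K where
  toSubring := (Subalgebra.algebraicClosure (Algebra.adjoin k s) K).toSubring
  inv_mem' _ := IsAlgebraic.inv_iff.2

variable {k} {s : Set K} {z : K}

lemma mem_algebraicHull : z ∈ algebraicHull k s ↔ IsAlgebraic (Algebra.adjoin k s) z :=
  Iff.rfl

lemma coe_algebraicHull (s : Set K) :
    (algebraicHull k s : Set K) = (AlgebraicIndependent.matroid k K).closure s := by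
  rw [AlgebraicIndependent.matroid_closure_eq]
  rfl

lemma subset_algebraicHull : s ⊆ algebraicHull k s := fun z hz =>
  isAlgebraic_algebraMap (⟨z, Algebra.subset_adjoin hz⟩ : Algebra.adjoin k s)

lemma mem_algebraicHull_of_zpow {m : ℤ} (hm : m ≠ 0) (hz : z ^ m ∈ algebraicHull k s) :
    z ∈ algebraicHull k s := by
  have hpow : z ^ m.natAbs ∈ algebraicHull k s := by
    rcases Int.natAbs_eq m with h | h
    · rwa [h, zpow_natCast] at hz
    · rwa [h, zpow_neg, zpow_natCast, inv_mem_iff] at hz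
  exact mem_algebraicHull.2 (IsAlgebraic.of_pow (Int.natAbs_pos.2 hm) hpow)

lemma coe_mem_algebraicHull_of_zpow_mem_closure {S : Set Kˣ} {u : Kˣ} {m : ℤ} (hm : m ≠ 0)
    (hu : u ^ m ∈ Subgroup.closure S) (hS : ∀ v ∈ S, (v : K) ∈ algebraicHull k s) :
    (u : K) ∈ algebraicHull k s := by
  have hclosure : ∀ v ∈ Subgroup.closure S, (v : K) ∈ algebraicHull k s := fun v hv => by
    induction hv using Subgroup.closure_induction with
    | mem v hv => exact hS v hv
    | one => exact one_mem _
    | mul v w _ _ hv hw => exact Units.val_mul v w ▸ mul_mem hv hw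
    | inv v _ hv => exact Units.val_inv_eq_inv_val v ▸ inv_mem hv
  exact mem_algebraicHull_of_zpow hm (Units.val_zpow_eq_zpow_val u m ▸ hclosure _ hu)

lemma card_le_encard_of_mem_algebraicHull {ι : Type*} [Finite ι] {c : ι → K}
    (hc : AlgebraicIndependent k c) {T : Set K} {R : Finset ι}
    (hR : ∀ p ∈ R, c p ∈ algebraicHull k (T ∪ c '' (R : Set ι)ᶜ)) : (R.card : ℕ∞) ≤ T.encard := by
  classical
  have := Fintype.ofFinite ι
  have hindep : (AlgebraicIndependent.matroid k K).Indep (Set.range c) :=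
    AlgebraicIndependent.matroid_indep_iff.2 hc.coe_range
  have hspan : Set.range c ⊆
      (AlgebraicIndependent.matroid k K).closure (T ∪ c '' (R : Set ι)ᶜ) := by
    rw [← coe_algebraicHull]
    rintro _ ⟨p, rfl⟩
    by_cases hp : p ∈ R
    · exact hR p hp
    · exact subset_algebraicHull (Or.inr ⟨p, hp, rfl⟩)
  have hle : (Fintype.card ι : ℕ∞) ≤ T.encard + (Rᶜ.card : ℕ) := calc
    (Fintype.card ι : ℕ∞) = (Set.range c).encard := by
      rw [← Set.image_univ, hc.injective.encard_image, Set.encard_univ,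
        ENat.card_eq_coe_fintype_card]
    _ ≤ (T ∪ c '' (R : Set ι)ᶜ).encard := by
      have := hindep.encard_le_eRk_of_subset hspan
      rw [Matroid.eRk_closure_eq] at this
      exact this.trans (Matroid.eRk_le_encard _ _)
    _ ≤ T.encard + (Rᶜ.card : ℕ) := by
      refine (Set.encard_union_le _ _).trans (add_le_add_right ?_ _)
      rw [← Finset.coe_compl, ← Set.encard_coe_eq_coe_finsetCard]
      exact Set.encard_image_le _ _
  rw [← R.card_add_card_compl, Nat.cast_add] at hle
  exact (ENat.add_le_add_iff_right (ENat.natCast_ne_top _)).1 hle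

end AlgebraicHull

section Elimination

variable {κ K : Type*} [Field K] {F : Subfield K} {s : Finset κ} {c m m' : κ → K}

lemma mem_subfield_of_sum_mul_eq_zero {a : κ} (ha : a ∈ s) (hsum : ∑ d ∈ s, c d * m d = 0)
    (hm : m a ∈ F) (hm0 : m a ≠ 0) (hF : ∀ d ∈ s, d ≠ a → c d * m d ∈ F) : c a ∈ F := by
  classical
  rw [← Finset.add_sum_erase _ _ ha, add_eq_zero_iff_eq_neg] at hsum
  have hmul : c a * m a ∈ F := hsum ▸ neg_mem (sum_mem fun d hd =>
    hF d (Finset.mem_of_mem_erase hd) (Finset.ne_of_mem_erase hd))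
  simpa only [mul_div_cancel_right₀ _ hm0] using div_mem hmul hm

lemma mem_subfield_of_two_sums_mul_eq_zero {a b : κ} (ha : a ∈ s)
    (hsum : ∑ d ∈ s, c d * m d = 0) (hsum' : ∑ d ∈ s, c d * m' d = 0)
    (hm : ∀ d, m d ∈ F) (hm' : ∀ d, m' d ∈ F) (hdet : m a * m' b ≠ m b * m' a)
    (hF : ∀ d ∈ s, d ≠ a → d ≠ b → c d ∈ F) : c a ∈ F := by
  have hminor (d : κ) : m d * m' b - m b * m' d ∈ F :=
    sub_mem (mul_mem (hm d) (hm' b)) (mul_mem (hm b) (hm' d))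
  refine mem_subfield_of_sum_mul_eq_zero (m := fun d => m d * m' b - m b * m' d) ha ?_
    (hminor a) (sub_ne_zero.2 hdet) fun d hd hda => ?_
  · calc ∑ d ∈ s, c d * (m d * m' b - m b * m' d)
        = (∑ d ∈ s, c d * m d) * m' b - m b * ∑ d ∈ s, c d * m' d := by
          rw [Finset.sum_mul, Finset.mul_sum, ← Finset.sum_sub_distrib]
          exact Finset.sum_congr rfl fun d _ => by ring
      _ = 0 := by rw [hsum, hsum', zero_mul, mul_zero, sub_zero]
  · obtain rfl | hdb := eq_or_ne d b
    · simp only [sub_self, mul_zero, zero_mem]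
    · exact mul_mem (hF d hd hda hdb) (hminor d)

end Elimination

section IsSolution

variable {n : ℕ} (A : Fin n → Finset (Fin n → ℤ))

/-- The tuple of units `x` of a commutative ring solves the system with coefficients `c` and
supports `A`. Over a ring of functions this is a family of systems with a family of roots. -/
def IsSolution {R : Type*} [CommRing R] (c : CIdx A → R) (x : Fin n → Rˣ) : Prop :=
  ∀ i, ∑ a ∈ (A i).attach, c ⟨i, a⟩ * (laurentMonomial a.1 x : Rˣ) = 0

variable {A}

lemma IsSolution.map {R R' : Type*} [CommRing R] [CommRing R'] {c : CIdx A → R} {x : Fin n → Rˣ}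
    (h : IsSolution A c x) (φ : R →+* R') : IsSolution A (φ ∘ c) (Units.map (φ : R →* R') ∘ x) := by
  intro i
  have := congrArg φ (h i)
  simp only [map_sum, map_mul, map_zero] at this
  simpa only [← map_laurentMonomial] using! this

variable {k K : Type*} [Field k] [Field K] [Algebra k K] {c : CIdx A → K} {x y : Fin n → Kˣ}

lemma coe_laurentMonomial_mem {F : Subfield K} (hx : ∀ j, (x j : K) ∈ F) (a : Fin n → ℤ) :
    ((laurentMonomial a x : Kˣ) : K) ∈ F :=
  coe_laurentMonomial a x ▸ laurentMonomial_mem hx a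

lemma IsSolution.exists_finset_card_eq_one (hx : IsSolution A c x) {i : Fin n}
    (hA : (A i).Nonempty) : ∃ P : Finset {a // a ∈ A i}, P.card = 1 ∧
      ∀ F : Subfield K, (∀ j, (x j : K) ∈ F) → (∀ a ∉ P, c ⟨i, a⟩ ∈ F) → ∀ a, c ⟨i, a⟩ ∈ F := by
  obtain ⟨a, ha⟩ := hA
  refine ⟨{⟨a, ha⟩}, Finset.card_singleton _, fun F hxF hF d => ?_⟩
  simp only [Finset.mem_singleton] at hF
  obtain rfl | hd := eq_or_ne d ⟨a, ha⟩
  · exact mem_subfield_of_sum_mul_eq_zero (c := fun d => c ⟨i, d⟩) (Finset.mem_attach _ _) (hx i)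
      (coe_laurentMonomial_mem hxF _) (Units.ne_zero _)
      fun d _ hd => mul_mem (hF d hd) (coe_laurentMonomial_mem hxF _)
  · exact hF d hd

lemma IsSolution.exists_finset_card_eq_two (hx : IsSolution A c x) (hy : IsSolution A c y)
    {i : Fin n} (hi : i ∉ constantIndices A (x / y)) : ∃ P : Finset {a // a ∈ A i}, P.card = 2 ∧
      ∀ F : Subfield K, (∀ j, (x j : K) ∈ F) → (∀ j, (y j : K) ∈ F) →
        (∀ a ∉ P, c ⟨i, a⟩ ∈ F) → ∀ a, c ⟨i, a⟩ ∈ F := by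
  simp only [mem_constantIndices, not_forall] at hi
  obtain ⟨a, ha, b, hb, hab⟩ := hi
  have hdet : ((laurentMonomial a x : Kˣ) : K) * (laurentMonomial b y : Kˣ) ≠
      (laurentMonomial b x : Kˣ) * (laurentMonomial a y : Kˣ) := by
    rwa [laurentMonomial_div, laurentMonomial_div, div_eq_div_iff_mul_eq_mul, Units.ext_iff,
      Units.val_mul, Units.val_mul] at hab
  have hne : (⟨a, ha⟩ : {a // a ∈ A i}) ≠ ⟨b, hb⟩ := by
    rintro ⟨⟩
    exact hdet rfl
  refine ⟨{⟨a, ha⟩, ⟨b, hb⟩}, Finset.card_pair hne, fun F hxF hyF hF d => ?_⟩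
  simp only [Finset.mem_insert, Finset.mem_singleton, not_or, and_imp] at hF
  have hsolve (a b : {a // a ∈ A i})
      (hdet : ((laurentMonomial a.1 x : Kˣ) : K) * (laurentMonomial b.1 y : Kˣ) ≠
        (laurentMonomial b.1 x : Kˣ) * (laurentMonomial a.1 y : Kˣ))
      (hF : ∀ d, d ≠ a → d ≠ b → c ⟨i, d⟩ ∈ F) : c ⟨i, a⟩ ∈ F :=
    mem_subfield_of_two_sums_mul_eq_zero (c := fun d => c ⟨i, d⟩) (Finset.mem_attach _ _)
      (hx i) (hy i) (fun d => coe_laurentMonomial_mem hxF d.1)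
      (fun d => coe_laurentMonomial_mem hyF d.1) hdet fun d _ => hF d
  obtain rfl | hda := eq_or_ne d ⟨a, ha⟩
  · exact hsolve ⟨a, ha⟩ ⟨b, hb⟩ hdet hF
  obtain rfl | hdb := eq_or_ne d ⟨b, hb⟩
  · exact hsolve ⟨b, hb⟩ ⟨a, ha⟩ hdet.symm fun d hdb hda => hF d hda hdb
  · exact hF d hda hdb

lemma encard_range_le {ι α : Type*} [Fintype ι] (f : ι → α) :
    (Set.range f).encard ≤ Fintype.card ι := by
  rw [← Set.image_univ, ← ENat.card_eq_coe_fintype_card, ← Set.encard_univ]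
  exact Set.encard_image_le _ _

lemma IsSolution.not_algebraicIndependent_option (hA : ∀ i, (A i).Nonempty)
    (hx : IsSolution A c x) (b : Fin n → ℤ) :
    ¬ AlgebraicIndependent k
      fun o : Option (CIdx A) => o.elim ((laurentMonomial b x : Kˣ) : K) c := by
  intro hind
  choose P hPcard hP using fun i => hx.exists_finset_card_eq_one (hA i)
  have hcard := card_le_encard_of_mem_algebraicHull hind
    (T := Set.range fun j => (x j : K)) (R := Finset.insertNone (Finset.univ.sigma P)) ?_
  · rw [Finset.card_insertNone, Finset.card_sigma, Finset.sum_congr rfl fun i _ => hPcard i,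
      Finset.sum_const, Finset.card_univ, smul_eq_mul, mul_one] at hcard
    have := hcard.trans (encard_range_le _)
    norm_cast at this
    omega
  · set F := algebraicHull k (_ : Set K)
    have hxF (j : Fin n) : (x j : K) ∈ F := subset_algebraicHull (Or.inl ⟨j, rfl⟩)
    rintro (_ | ⟨i, a⟩) -
    · exact coe_laurentMonomial_mem hxF b
    · exact hP i F hxF (fun a ha => subset_algebraicHull
        (Or.inr ⟨some ⟨i, a⟩, by simpa using ha, rfl⟩)) a

lemma IsSolution.not_algebraicIndependent_of_constantIndices_nonempty (hred : IsReducedTuple A)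
    (hirr : IsIrreducibleTuple A) (hx : IsSolution A c x) (hy : IsSolution A c y) (hxy : x ≠ y)
    (hconst : (constantIndices A (x / y)).Nonempty) : ¬ AlgebraicIndependent k c := by
  intro hind
  obtain ⟨J, hJcard, hJ⟩ := exists_finset_card_add_card_constantIndices_lt hred hirr
    (mt div_eq_one.1 hxy) hconst
  have hpivots (i : Fin n) : ∃ P : Finset {a // a ∈ A i},
      P.card + (if i ∈ constantIndices A (x / y) then 1 else 0) = 2 ∧
      ∀ F : Subfield K, (∀ j, (x j : K) ∈ F) → (∀ j, (y j : K) ∈ F) →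
        (∀ a ∉ P, c ⟨i, a⟩ ∈ F) → ∀ a, c ⟨i, a⟩ ∈ F := by
    split_ifs with hi
    · obtain ⟨P, hcard, hP⟩ := hx.exists_finset_card_eq_one (support_nonempty hred hirr i)
      exact ⟨P, by rw [hcard], fun F hxF _ => hP F hxF⟩
    · exact hx.exists_finset_card_eq_two hy hi
  choose P hPcard hP using hpivots
  have hcard := card_le_encard_of_mem_algebraicHull hind (R := Finset.univ.sigma P)
    (T := (fun j => ((x j / y j : Kˣ) : K)) '' J ∪ Set.range fun j => (y j : K)) ?_
  · have hle : (∑ i, (P i).card : ℕ) ≤ J.card + n := by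
      rw [Finset.card_sigma] at hcard
      refine ENat.natCast_le_natCast.1 (hcard.trans ((Set.encard_union_le _ _).trans ?_))
      rw [Nat.cast_add]
      refine add_le_add ((Set.encard_image_le _ _).trans ?_) ((encard_range_le _).trans ?_) <;> simp
    have hsum : ∑ i, (P i).card + (constantIndices A (x / y)).card = n * 2 := by
      simpa [Finset.sum_add_distrib] using Finset.sum_congr rfl fun i (_ : i ∈ Finset.univ) =>
        hPcard i
    omega
  · set F := algebraicHull k (_ : Set K)
    have hyF (j : Fin n) : (y j : K) ∈ F := subset_algebraicHull (Or.inl (Or.inr ⟨j, rfl⟩))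
    have hxF (j : Fin n) : (x j : K) ∈ F := by
      obtain ⟨m, hm, hmem⟩ := hJ j
      have hquot : ((x j / y j : Kˣ) : K) ∈ F :=
        coe_mem_algebraicHull_of_zpow_mem_closure hm hmem <| by
          rintro _ ⟨j, hj, rfl⟩
          exact subset_algebraicHull (Or.inl (Or.inl ⟨j, hj, rfl⟩))
      simpa using mul_mem hquot (hyF j)
    rintro ⟨i, a⟩ -
    exact hP i F hxF hyF (fun a ha => subset_algebraicHull
        (Or.inr ⟨⟨i, a⟩, by simpa using ha, rfl⟩)) a

end IsSolution

section FunctionRing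

universe u

/-- A prime ideal avoiding the nonzero polynomials in `F` cuts out a domain in which `F` stays
algebraically independent. -/
lemma exists_field_algHom_algebraicIndependent {ι k : Type*} {R : Type u} [CommRing k] [IsDomain k]
    [CommRing R] [Algebra k R] {F : ι → R} (hF : AlgebraicIndependent k F) :
    ∃ (K : Type u) (_ : Field K) (_ : Algebra k K) (Φ : R →ₐ[k] K),
      AlgebraicIndependent k (Φ ∘ F) := by
  let M : Submonoid R := (nonZeroDivisors (MvPolynomial ι k)).map (MvPolynomial.aeval F)
  have hdisjoint : Disjoint ((⊥ : Ideal R) : Set R) (M : Set R) := by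
    rw [Set.disjoint_left]
    rintro z hz ⟨Q, hQ, rfl⟩
    refine nonZeroDivisors.ne_zero hQ (hF ?_)
    rwa [map_zero]
  obtain ⟨p, hp, -, hpM⟩ := Ideal.exists_le_prime_disjoint ⊥ M hdisjoint
  let K := FractionRing (R ⧸ p)
  let Φ : R →ₐ[k] K := (IsScalarTower.toAlgHom k (R ⧸ p) K).comp (Ideal.Quotient.mkₐ k p)
  refine ⟨K, inferInstance, inferInstance, Φ, algebraicIndependent_iff.2 fun Q hQ => ?_⟩
  by_contra hQ0
  refine Set.disjoint_left.1 hpM ?_ ⟨Q, mem_nonZeroDivisors_of_ne_zero hQ0, rfl⟩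
  have hmap : algebraMap (R ⧸ p) K (Ideal.Quotient.mk p (MvPolynomial.aeval F Q)) = 0 :=
    (MvPolynomial.comp_aeval_apply F Φ Q).trans hQ
  rw [IsFractionRing.to_map_eq_zero_iff] at hmap
  exact Ideal.Quotient.eq_zero_iff_mem.1 hmap

lemma exists_ne_zero_eval_eq_zero {S ι : Type*} {F : ι → S → ℂ} (hF : ¬ AlgebraicIndependent ℂ F) :
    ∃ Q : MvPolynomial ι ℂ, Q ≠ 0 ∧ ∀ s, MvPolynomial.eval (fun i => F i s) Q = 0 := by
  rw [algebraicIndependent_iff] at hF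
  push Not at hF
  obtain ⟨Q, hQ, hQ0⟩ := hF
  refine ⟨Q, hQ0, fun s => ?_⟩
  have heval := congrArg (Pi.evalAlgHom ℂ (fun _ : S => ℂ) s) hQ
  rwa [MvPolynomial.comp_aeval_apply, map_zero, MvPolynomial.aeval_eq_eval] at heval

variable {n : ℕ} {A : Fin n → Finset (Fin n → ℤ)} {k : Type*} {R : Type u} [Field k] [CommRing R]
  [Algebra k R] {c : CIdx A → R} {x y : Fin n → Rˣ}

lemma IsSolution.not_algebraicIndependent_option_of_commRing (hA : ∀ i, (A i).Nonempty)
    (hx : IsSolution A c x) (b : Fin n → ℤ) : ¬ AlgebraicIndependent k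
      fun o : Option (CIdx A) => o.elim ((laurentMonomial b x : Rˣ) : R) c := by
  intro hind
  obtain ⟨K, _, _, Φ, hΦ⟩ := exists_field_algHom_algebraicIndependent hind
  refine (hx.map (Φ : R →+* K)).not_algebraicIndependent_option hA b ?_ (k := k)
  rw [← map_laurentMonomial]
  convert hΦ using 1
  funext o
  cases o <;> rfl

lemma IsSolution.not_algebraicIndependent_of_mem_constantIndices (hred : IsReducedTuple A)
    (hirr : IsIrreducibleTuple A) (hx : IsSolution A c x) (hy : IsSolution A c y) {i j : Fin n}
    (hi : i ∈ constantIndices A (x / y)) (hj : IsUnit (x j - y j : R)) :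
    ¬ AlgebraicIndependent k c := by
  intro hind
  obtain ⟨K, _, _, Φ, hΦ⟩ := exists_field_algHom_algebraicIndependent hind
  let φ : Rˣ →* Kˣ := Units.map (Φ : R →* K)
  have hne : φ ∘ x ≠ φ ∘ y := fun h => by
    have hzero : Φ (x j - y j) = 0 := by
      rw [map_sub, sub_eq_zero]
      exact congrArg Units.val (congrFun h j)
    exact (hj.map Φ).ne_zero hzero
  have hconst : i ∈ constantIndices A (φ ∘ x / φ ∘ y) := by
    rw [mem_constantIndices] at hi ⊢
    have hdiv : φ ∘ x / φ ∘ y = φ ∘ (x / y) := funext fun j => (map_div φ (x j) (y j)).symm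
    intro a ha b hb
    rw [hdiv, ← map_laurentMonomial, ← map_laurentMonomial, hi a ha b hb]
  exact (hx.map (Φ : R →+* K)).not_algebraicIndependent_of_constantIndices_nonempty hred hirr
    (hy.map (Φ : R →+* K)) hne ⟨i, hconst⟩ hΦ

end FunctionRing

open Filter Topology
open scoped Polynomial

section Generic

variable {ι : Type*} {p q : (ι → ℂ) → Prop}

/-- The property `p` holds on a nonempty principal Zariski open subset of `ℂ^ι`. -/
def Generic (p : (ι → ℂ) → Prop) : Prop :=
  ∃ Q : MvPolynomial ι ℂ, Q ≠ 0 ∧ ∀ c, MvPolynomial.eval c Q ≠ 0 → p c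

lemma Generic.mono (hp : Generic p) (hpq : ∀ c, p c → q c) : Generic q :=
  hp.imp fun _ hQ => ⟨hQ.1, fun c hc => hpq c (hQ.2 c hc)⟩

lemma Generic.and (hp : Generic p) (hq : Generic q) : Generic fun c => p c ∧ q c := by
  obtain ⟨P, hP, hPp⟩ := hp
  obtain ⟨Q, hQ, hQq⟩ := hq
  refine ⟨P * Q, mul_ne_zero hP hQ, fun c hc => ?_⟩
  rw [map_mul, mul_ne_zero_iff] at hc
  exact ⟨hPp c hc.1, hQq c hc.2⟩

lemma Generic.forall {κ : Type*} [Finite κ] {p : κ → (ι → ℂ) → Prop} (hp : ∀ i, Generic (p i)) :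
    Generic fun c => ∀ i, p i c := by
  have := Fintype.ofFinite κ
  choose Q hQ hQp using hp
  refine ⟨∏ i, Q i, Finset.prod_ne_zero_iff.2 fun i _ => hQ i, fun c hc i => hQp i c ?_⟩
  rw [map_prod, Finset.prod_ne_zero_iff] at hc
  exact hc i (Finset.mem_univ i)

lemma Generic.eventually (hp : Generic p) : Generic fun c => ∀ᶠ c' in 𝓝 c, p c' := by
  obtain ⟨Q, hQ, hQp⟩ := hp
  refine ⟨Q, hQ, fun c hc => ?_⟩
  filter_upwards [(MvPolynomial.continuous_eval Q).continuousAt.eventually_ne hc] with c' hc'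
  exact hQp c' hc'

end Generic

section GenericRoots

variable {n : ℕ} {A : Fin n → Finset (Fin n → ℤ)}

lemma mono_eq_coe_laurentMonomial (a : Fin n → ℤ) (x : Torus n) :
    mono a x = (laurentMonomial a x : ℂˣ) :=
  (coe_laurentMonomial a x).symm

variable {S : Type*}

/-- A family of points of the torus, as a tuple of units of the ring of functions on the parameter
set. -/
def torusFamily (x : S → Torus n) : Fin n → (S → ℂ)ˣ :=
  fun j => MulEquiv.piUnits.symm fun s => x s j

lemma laurentMonomial_torusFamily (a : Fin n → ℤ) (x : S → Torus n) :
    laurentMonomial a (torusFamily x) = MulEquiv.piUnits.symm fun s => laurentMonomial a (x s) := by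
  ext s
  simpa [torusFamily] using! congrArg Units.val
    (map_laurentMonomial (Units.map (Pi.evalMonoidHom (fun _ : S => ℂ) s)) a (torusFamily x))

lemma coe_laurentMonomial_torusFamily (a : Fin n → ℤ) (x : S → Torus n) :
    ((laurentMonomial a (torusFamily x) : (S → ℂ)ˣ) : S → ℂ) = fun s => mono a (x s) := by
  simp only [laurentMonomial_torusFamily, mono_eq_coe_laurentMonomial]
  rfl

lemma isSolution_torusFamily {c : S → Coeff A} {x : S → Torus n}
    (h : ∀ s, IsRoot A (c s) (x s)) : IsSolution A (fun p s => c s p) (torusFamily x) := by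
  intro i
  funext s
  simpa [coe_laurentMonomial_torusFamily, evalAt] using h s i

lemma exists_polynomial_eval₂_mono_eq_zero (hA : ∀ i, (A i).Nonempty) (b : Fin n → ℤ) :
    ∃ P : (MvPolynomial (CIdx A) ℂ)[X], P ≠ 0 ∧ ∀ (c : Coeff A) (x : Torus n), IsRoot A c x →
      P.eval₂ (MvPolynomial.eval c) (mono b x) = 0 := by
  let S := {s : Coeff A × Torus n // IsRoot A s.1 s.2}
  obtain ⟨Q, hQ, hroot⟩ := exists_ne_zero_eval_eq_zero
    ((isSolution_torusFamily fun s : S => s.2).not_algebraicIndependent_option_of_commRing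
      (k := ℂ) hA b)
  refine ⟨MvPolynomial.optionEquivLeft ℂ _ Q, by simpa using hQ, fun c x hx => ?_⟩
  rw [← Polynomial.eval_map, ← MvPolynomial.optionEquivLeft_elim_eval]
  convert! hroot ⟨(c, x), hx⟩ using 3
  funext o
  cases o <;> simp [coe_laurentMonomial_torusFamily]

lemma generic_eq_of_mem_constantIndices (hred : IsReducedTuple A) (hirr : IsIrreducibleTuple A)
    (i j : Fin n) : Generic fun c : Coeff A => ∀ x y, IsRoot A c x → IsRoot A c y →
      i ∈ constantIndices A (x / y) → x j = y j := by
  let S := {s : Coeff A × Torus n × Torus n // IsRoot A s.1 s.2.1 ∧ IsRoot A s.1 s.2.2 ∧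
    i ∈ constantIndices A (s.2.1 / s.2.2) ∧ s.2.1 j ≠ s.2.2 j}
  let x : S → Torus n := fun s => s.1.2.1
  let y : S → Torus n := fun s => s.1.2.2
  have hi : i ∈ constantIndices A (torusFamily x / torusFamily y) := by
    rw [mem_constantIndices]
    intro a ha b hb
    simp only [laurentMonomial_div, laurentMonomial_torusFamily, ← map_div]
    refine congrArg _ (funext fun s => ?_)
    simpa [laurentMonomial_div] using mem_constantIndices.1 s.2.2.2.1 a ha b hb
  have hj : IsUnit ((torusFamily x j : S → ℂ) - torusFamily y j) :=
    Pi.isUnit_iff.2 fun s => isUnit_iff_ne_zero.2 (sub_ne_zero.2 fun h => s.2.2.2.2 (Units.ext h))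
  obtain ⟨Q, hQ, hroot⟩ := exists_ne_zero_eval_eq_zero
    ((isSolution_torusFamily fun s : S => s.2.1).not_algebraicIndependent_of_mem_constantIndices
      (k := ℂ) hred hirr (isSolution_torusFamily fun s : S => s.2.2.1) hi hj)
  refine ⟨Q, hQ, fun c hc x y hx hy hi => ?_⟩
  by_contra hne
  exact hc (hroot ⟨(c, x, y), hx, hy, hi, hne⟩)

lemma generic_constantIndices_eq_empty (hred : IsReducedTuple A) (hirr : IsIrreducibleTuple A) :
    Generic fun c : Coeff A => ∀ x y, IsRoot A c x → IsRoot A c y → x ≠ y →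
      constantIndices A (x / y) = ∅ := by
  refine (Generic.forall fun i => Generic.forall fun j =>
    generic_eq_of_mem_constantIndices hred hirr i j).mono fun c hc x y hx hy hxy => ?_
  exact Finset.eq_empty_of_forall_notMem fun i hi => hxy (funext fun j => hc i j x y hx hy hi)

end GenericRoots

section PolynomialRoots

open Polynomial

lemma exists_map_algebraMap_eq_C_mul {R K : Type*} [CommRing R] [IsDomain R] [Field K]
    [Algebra R K] [IsFractionRing R K] (p : K[X]) :
    ∃ b : R, b ≠ 0 ∧ ∃ q : R[X], q.map (algebraMap R K) = C (algebraMap R K b) * p := by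
  obtain ⟨b, hb, hq⟩ := IsLocalization.integerNormalization_spec (nonZeroDivisors R) p
  refine ⟨b, nonZeroDivisors.ne_zero hb, _, hq.trans ?_⟩
  ext k
  rw [coeff_C_mul, coeff_smul, Algebra.smul_def]

/-- Clear denominators in a squarefree polynomial with the same roots as `P` over the fraction
field, and in the Bézout identity that expresses its separability. -/
lemma exists_dvd_C_mul_pow_and_bezout_derivative {R : Type*} [CommRing R] [IsDomain R] [CharZero R]
    {P : R[X]} (hP : P ≠ 0) : ∃ (b d : R) (r : R[X]) (m : ℕ), b ≠ 0 ∧ d ≠ 0 ∧ P ∣ C b * r ^ m ∧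
      ∃ U V, U * r + V * derivative r = C d := by
  let K := FractionRing R
  have hinj : Function.Injective (Polynomial.map (algebraMap R K)) :=
    map_injective _ (IsFractionRing.injective R K)
  have : CharZero K := charZero_of_injective_algebraMap (IsFractionRing.injective R K)
  obtain ⟨s, m, hsq, -, w, hw⟩ := exists_squarefree_dvd_pow_of_ne_zero ((Polynomial.map_ne_zero_iff
    (IsFractionRing.injective R K)).2 hP)
  obtain ⟨u, v, huv⟩ := PerfectField.separable_iff_squarefree.2 hsq
  obtain ⟨b₁, hb₁, r, hr⟩ := exists_map_algebraMap_eq_C_mul (R := R) s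
  obtain ⟨b₂, hb₂, W, hW⟩ := exists_map_algebraMap_eq_C_mul (R := R) w
  obtain ⟨b₃, hb₃, U, hU⟩ := exists_map_algebraMap_eq_C_mul (R := R) u
  obtain ⟨b₄, hb₄, V, hV⟩ := exists_map_algebraMap_eq_C_mul (R := R) v
  refine ⟨b₂, b₁ * b₃ * b₄, r, m, hb₂, by positivity, ⟨C (b₁ ^ m) * W, hinj ?_⟩, C b₄ * U, C b₃ * V,
    map_injective _ (IsFractionRing.injective R K) ?_⟩
  · simp only [Polynomial.map_mul, Polynomial.map_pow, map_C, hr, hW, mul_pow, hw, map_pow]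
    ring
  · simp only [Polynomial.map_mul, Polynomial.map_add, map_C, ← derivative_map, hr, hU, hV,
      derivative_C_mul, map_mul]
    linear_combination C (algebraMap R K b₁) * C (algebraMap R K b₃) * C (algebraMap R K b₄) * huv

lemma exists_forall_eval₂_derivative_ne_zero {R : Type*} [CommRing R] [IsDomain R] [CharZero R]
    {P : R[X]} (hP : P ≠ 0) : ∃ (r : R[X]) (d : R), d ≠ 0 ∧
      ∀ {K : Type*} [Field K] (φ : R →+* K) (t : K), φ d ≠ 0 → P.eval₂ φ t = 0 →
        r.eval₂ φ t = 0 ∧ (derivative r).eval₂ φ t ≠ 0 := by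
  obtain ⟨b, d, r, m, hb, hd, ⟨W, hW⟩, U, V, hUV⟩ :=
    exists_dvd_C_mul_pow_and_bezout_derivative hP
  refine ⟨r, b * d, mul_ne_zero hb hd, fun φ t hbd ht => ?_⟩
  rw [map_mul, mul_ne_zero_iff] at hbd
  replace hW := congrArg (eval₂ φ t) hW
  replace hUV := congrArg (eval₂ φ t) hUV
  simp only [eval₂_mul, eval₂_add, eval₂_pow, eval₂_C, ht, zero_mul, mul_eq_zero, hbd.1,
    false_or] at hW hUV
  have hr : r.eval₂ φ t = 0 := eq_zero_of_pow_eq_zero hW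
  refine ⟨hr, fun hr' => hbd.2 ?_⟩
  rw [← hUV, hr, hr', mul_zero, mul_zero, add_zero]

lemma exists_eventually_norm_le_of_eval₂_eq_zero {X : Type*} [TopologicalSpace X] {R : Type*}
    [CommRing R] {φ : X → R →+* ℂ} (hφ : ∀ p, Continuous fun c => φ c p) (P : R[X]) {c : X}
    (hc : φ c P.leadingCoeff ≠ 0) :
    ∃ M : ℝ, ∀ᶠ c' in 𝓝 c, ∀ t, P.eval₂ (φ c') t = 0 → ‖t‖ ≤ M := by
  have hlead : ∀ᶠ c' in 𝓝 c, φ c' P.leadingCoeff ≠ 0 :=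
    (hφ _).continuousAt.eventually_ne hc
  have hbound : ∀ᶠ c' in 𝓝 c, (P.map (φ c')).cauchyBound =
      (Finset.range P.natDegree).sup (fun k => ‖φ c' (P.coeff k)‖₊) /
        ‖φ c' P.leadingCoeff‖₊ + 1 := by
    filter_upwards [hlead] with c' hc'
    simp only [cauchyBound, natDegree_map_of_leadingCoeff_ne_zero _ hc',
      leadingCoeff_map_of_leadingCoeff_ne_zero _ hc', coeff_map]
  have hcont : ContinuousAt (fun c' => (P.map (φ c')).cauchyBound) c := by
    refine ContinuousAt.congr ?_ (hbound.mono fun _ => Eq.symm)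
    refine (ContinuousAt.div₀ ?_ (hφ _).nnnorm.continuousAt (nnnorm_ne_zero_iff.2 hc)).add
      continuousAt_const
    exact ContinuousAt.finset_sup_apply fun k _ => (hφ (P.coeff k)).nnnorm.continuousAt
  refine ⟨((P.map (φ c)).cauchyBound + 1 : NNReal), ?_⟩
  filter_upwards [hlead, hcont.eventually_lt_const (lt_add_one _)] with c' hc' hlt t ht
  have hP : P.map (φ c') ≠ 0 := fun h => hc' <| by
    rw [← leadingCoeff_map_of_leadingCoeff_ne_zero _ hc', h, leadingCoeff_zero]
  rw [← eval_map] at ht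
  exact_mod_cast ((IsRoot.norm_lt_cauchyBound hP ht).trans hlt).le

end PolynomialRoots

section ExponentialCoordinates

variable {n : ℕ} {A : Fin n → Finset (Fin n → ℤ)}

/-- The exponential map `ℂⁿ → (ℂ∖0)ⁿ`. The maps `w ↦ x * torusExp w` serve as local coordinates of
the torus in which all Laurent monomials are exponentials. -/
noncomputable def torusExp (w : Fin n → ℂ) : Torus n :=
  fun j => Units.mk0 (Complex.exp (w j)) (Complex.exp_ne_zero _)

lemma torusExp_zero : torusExp (0 : Fin n → ℂ) = 1 := by
  ext j
  simp [torusExp]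

lemma torusExp_log (x : Torus n) : torusExp (fun j => Complex.log (x j)) = x := by
  ext j
  simp [torusExp, Complex.exp_log]

lemma continuous_torusExp : Continuous (torusExp : (Fin n → ℂ) → Torus n) :=
  continuous_pi fun j => Units.isEmbedding_val₀.continuous_iff.2
    (Complex.continuous_exp.comp (continuous_apply j))

lemma mono_mul_torusExp (a : Fin n → ℤ) (x : Torus n) (w : Fin n → ℂ) :
    mono a (x * torusExp w) = mono a x * Complex.exp (∑ j, a j * w j) := by
  simp [mono, torusExp, mul_zpow, Finset.prod_mul_distrib, Complex.exp_sum, Complex.exp_int_mul]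

lemma contDiff_evalAt_mul_torusExp (x : Torus n) :
    ContDiff ℂ 1 fun p : Coeff A × (Fin n → ℂ) => fun i => evalAt A p.1 i (x * torusExp p.2) := by
  simp only [evalAt, mono_mul_torusExp]
  fun_prop

lemma hasDerivAt_mono_mul_torusExp (a : Fin n → ℤ) (x : Torus n) (w : Fin n → ℂ) :
    HasDerivAt (fun s : ℂ => mono a (x * torusExp (s • w))) (mono a x * ∑ j, a j * w j) 0 := by
  have hline : HasDerivAt (fun s : ℂ => s * ∑ j, a j * w j) (∑ j, a j * w j) 0 := by
    simpa using (hasDerivAt_id (0 : ℂ)).mul_const (∑ j, a j * w j)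
  have hmono := hline.cexp.const_mul (mono a x)
  simp only [zero_mul, Complex.exp_zero, one_mul] at hmono
  simpa only [mono_mul_torusExp, Pi.smul_apply, smul_eq_mul, mul_left_comm, Finset.mul_sum]
    using hmono

lemma hasDerivAt_evalAt_mul_torusExp (c : Coeff A) (i : Fin n) (x : Torus n) (w : Fin n → ℂ) :
    HasDerivAt (fun s : ℂ => evalAt A c i (x * torusExp (s • w)))
      ((jacobian A c x).mulVec (fun j => x j * w j) i) 0 := by
  have hsum := HasDerivAt.fun_sum fun a (_ : a ∈ (A i).attach) =>
    (hasDerivAt_mono_mul_torusExp a.1 x w).const_mul (c ⟨i, a⟩)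
  refine hsum.congr_deriv ?_
  simp only [Matrix.mulVec, dotProduct, jacobian, Matrix.of_apply, mul_assoc, ne_eq, Units.ne_zero,
    not_false_eq_true, inv_mul_cancel_left₀, Finset.sum_mul, Finset.mul_sum]
  rw [Finset.sum_comm]
  exact Finset.sum_congr rfl fun j _ => Finset.sum_congr rfl fun a _ => by ring

end ExponentialCoordinates

section SingularRoots

lemma hasDerivAt_mvPolynomial_eval_zero {𝕜 ι : Type*} [NontriviallyNormedField 𝕜] [CompleteSpace 𝕜]
    [Finite ι] {c : 𝕜 → ι → 𝕜} {s : 𝕜} (hc : HasDerivAt c 0 s) (p : MvPolynomial ι 𝕜) :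
    HasDerivAt (fun t => MvPolynomial.eval (c t) p) 0 s := by
  have := Fintype.ofFinite ι
  have hp := (AnalyticOnNhd.eval_mvPolynomial p (c s) (Set.mem_univ _)).differentiableAt
  simpa using! hp.hasFDerivAt.comp_hasDerivAt s hc

lemma hasDerivAt_eval₂ {𝕜 R : Type*} [NontriviallyNormedField 𝕜] [CommRing R] {φ : 𝕜 → R →+* 𝕜}
    {T : 𝕜 → 𝕜} {s v : 𝕜} (hφ : ∀ p, HasDerivAt (fun t => φ t p) 0 s) (hT : HasDerivAt T v s)
    (r : R[X]) : HasDerivAt (fun t => r.eval₂ (φ t) (T t))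
      ((Polynomial.derivative r).eval₂ (φ s) (T s) * v) s := by
  induction r using Polynomial.induction_on' with
  | add p q hp hq =>
    simpa only [Polynomial.eval₂_add, Polynomial.derivative_add, add_mul] using hp.fun_add hq
  | monomial k a =>
    simp only [Polynomial.eval₂_monomial, Polynomial.derivative_monomial]
    refine ((hφ a).fun_mul (hT.fun_pow k)).congr_deriv ?_
    simp only [map_mul, map_natCast]
    ring

variable {n : ℕ} {A : Fin n → Finset (Fin n → ℤ)}

/-- The system obtained from `c` by changing the coefficient of one monomial `a₀ i` of each
polynomial so as to make `x` a root. -/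
noncomputable def interpolate (a₀ : ∀ i, {a // a ∈ A i}) (c : Coeff A) (x : Torus n) : Coeff A :=
  fun q => c q - if q.2 = a₀ q.1 then evalAt A c q.1 x / mono (a₀ q.1).1 x else 0

lemma mono_ne_zero (a : Fin n → ℤ) (x : Torus n) : mono a x ≠ 0 := by
  rw [mono_eq_coe_laurentMonomial]
  exact Units.ne_zero _

lemma isRoot_interpolate (a₀ : ∀ i, {a // a ∈ A i}) (c : Coeff A) (x : Torus n) :
    IsRoot A (interpolate a₀ c x) x := by
  intro i
  simp [evalAt, interpolate, sub_mul, Finset.sum_sub_distrib, ite_mul, mono_ne_zero]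

lemma interpolate_of_isRoot (a₀ : ∀ i, {a // a ∈ A i}) {c : Coeff A} {x : Torus n}
    (hx : IsRoot A c x) : interpolate a₀ c x = c := by
  funext q
  simp [interpolate, hx q.1]

lemma hasDerivAt_interpolate (a₀ : ∀ i, {a // a ∈ A i}) {c : Coeff A} {x : Torus n}
    (hx : IsRoot A c x) {w : Fin n → ℂ}
    (hw : (jacobian A c x).mulVec (fun j => x j * w j) = 0) :
    HasDerivAt (fun s : ℂ => interpolate a₀ c (x * torusExp (s • w))) 0 0 := by
  refine hasDerivAt_pi.2 fun q => ?_
  have hcorr : HasDerivAt (fun s : ℂ => if q.2 = a₀ q.1 then evalAt A c q.1 (x * torusExp (s • w)) /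
      mono (a₀ q.1).1 (x * torusExp (s • w)) else 0) 0 0 := by
    split_ifs
    · refine ((hasDerivAt_evalAt_mul_torusExp c q.1 x w).fun_div
        (hasDerivAt_mono_mul_torusExp (a₀ q.1).1 x w) (mono_ne_zero _ _)).congr_deriv ?_
      simp [hw, torusExp_zero, hx q.1]
    · exact hasDerivAt_const _ _
  simpa [interpolate] using! hcorr.const_sub (c q)

/-- Move the root along a kernel vector of the Jacobian while the system, corrected by
`interpolate`, stays constant to first order: differentiating the equations satisfied by the
coordinates of the root shows that the vector vanishes. -/
lemma det_jacobian_ne_zero (hA : ∀ i, (A i).Nonempty) {c : Coeff A} {x : Torus n}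
    (hx : IsRoot A c x) {r : Fin n → (MvPolynomial (CIdx A) ℂ)[X]}
    (hr : ∀ᶠ c' in 𝓝 c, ∀ y, IsRoot A c' y → ∀ j, (r j).eval₂ (MvPolynomial.eval c') (y j) = 0)
    (hr' : ∀ j, (Polynomial.derivative (r j)).eval₂ (MvPolynomial.eval c) (x j) ≠ 0) :
    (jacobian A c x).det ≠ 0 := by
  rw [ne_eq, ← Matrix.exists_mulVec_eq_zero_iff]
  push Not
  intro v hv hJ
  let w : Fin n → ℂ := fun j => v j / x j
  have hw : (jacobian A c x).mulVec (fun j => x j * w j) = 0 := by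
    simpa [w, mul_div_cancel₀] using hJ
  choose a₀ ha₀ using hA
  let γ : ℂ → Coeff A := fun s =>
    interpolate (fun i => ⟨a₀ i, ha₀ i⟩) c (x * torusExp (s • w))
  have hγ : HasDerivAt γ 0 0 := hasDerivAt_interpolate _ hx hw
  have hγ₀ : γ 0 = c := by
    simp only [γ, zero_smul, torusExp_zero, mul_one, interpolate_of_isRoot _ hx]
  refine hv (funext fun j => ?_)
  have hcoord : HasDerivAt (fun s : ℂ => (x j : ℂ) * Complex.exp (s * w j)) (v j) 0 := by
    refine (((hasDerivAt_id (0 : ℂ)).mul_const (w j)).cexp.const_mul (x j : ℂ)).congr_deriv ?_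
    simp [w, mul_div_cancel₀]
  have hderiv := hasDerivAt_eval₂ (hasDerivAt_mvPolynomial_eval_zero hγ) hcoord (r j)
  have hzero : (fun s => (r j).eval₂ (MvPolynomial.eval (γ s)) (x j * Complex.exp (s * w j)))
      =ᶠ[𝓝 0] fun _ => 0 := by
    have hγc : Tendsto γ (𝓝 0) (𝓝 c) := hγ₀ ▸ hγ.continuousAt
    filter_upwards [hγc.eventually hr] with s hs
    exact hs _ (isRoot_interpolate _ c _) j
  have hv := hderiv.unique (hzero.hasDerivAt_iff.2 (hasDerivAt_const 0 0))
  rw [hγ₀, zero_mul, Complex.exp_zero, mul_one] at hv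
  exact (mul_eq_zero.1 hv).resolve_left (hr' j)

end SingularRoots

section GenericRegularity

variable {n : ℕ} {A : Fin n → Finset (Fin n → ℤ)}

lemma mono_single (j : Fin n) (x : Torus n) : mono (Pi.single j 1) x = x j := by
  rw [mono_eq_coe_laurentMonomial, laurentMonomial_single]

lemma mono_neg (a : Fin n → ℤ) (x : Torus n) : mono (-a) x = (mono a x)⁻¹ := by
  simp [mono]

lemma generic_exists_eventually_norm_mono_le (hA : ∀ i, (A i).Nonempty) (b : Fin n → ℤ) :
    Generic fun c : Coeff A => ∃ M : ℝ, ∀ᶠ c' in 𝓝 c, ∀ x, IsRoot A c' x → ‖mono b x‖ ≤ M := by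
  obtain ⟨P, hP, hroot⟩ := exists_polynomial_eval₂_mono_eq_zero hA b
  refine ⟨P.leadingCoeff, Polynomial.leadingCoeff_ne_zero.2 hP, fun c hc => ?_⟩
  obtain ⟨M, hM⟩ := exists_eventually_norm_le_of_eval₂_eq_zero MvPolynomial.continuous_eval P hc
  exact ⟨M, hM.mono fun c' hc' x hx => hc' _ (hroot c' x hx)⟩

lemma generic_exists_eventually_norm_le (hA : ∀ i, (A i).Nonempty) :
    Generic fun c : Coeff A => ∃ M : ℝ, ∀ᶠ c' in 𝓝 c, ∀ x, IsRoot A c' x →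
      ∀ j, ‖(x j : ℂ)‖ ≤ M ∧ ‖(x j : ℂ)⁻¹‖ ≤ M := by
  have hgen := Generic.forall fun j => (generic_exists_eventually_norm_mono_le hA
    (Pi.single j 1)).and (generic_exists_eventually_norm_mono_le hA (-Pi.single j 1))
  simp only [mono_neg, mono_single] at hgen
  refine hgen.mono fun c hc => ?_
  choose M hM using fun j => (hc j).1
  choose M' hM' using fun j => (hc j).2
  obtain ⟨B, hB⟩ := Finite.bddAbove_range M
  obtain ⟨B', hB'⟩ := Finite.bddAbove_range M'
  refine ⟨max B B', ?_⟩
  filter_upwards [eventually_all.2 hM, eventually_all.2 hM'] with c' h h' x hx j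
  exact ⟨(h j x hx).trans ((hB ⟨j, rfl⟩).trans (le_max_left _ _)),
    (h' j x hx).trans ((hB' ⟨j, rfl⟩).trans (le_max_right _ _))⟩

lemma exists_polynomial_generic_simple_root (hA : ∀ i, (A i).Nonempty) (j : Fin n) :
    ∃ r : (MvPolynomial (CIdx A) ℂ)[X], Generic fun c : Coeff A => ∀ x, IsRoot A c x →
      r.eval₂ (MvPolynomial.eval c) (x j) = 0 ∧
      (Polynomial.derivative r).eval₂ (MvPolynomial.eval c) (x j) ≠ 0 := by
  obtain ⟨P, hP, hroot⟩ := exists_polynomial_eval₂_mono_eq_zero hA (Pi.single j 1)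
  obtain ⟨r, d, hd, hr⟩ := exists_forall_eval₂_derivative_ne_zero hP
  refine ⟨r, d, hd, fun c hc x hx => hr _ _ hc ?_⟩
  rw [← mono_single]
  exact hroot c x hx

lemma generic_not_isSingularRoot (hA : ∀ i, (A i).Nonempty) :
    Generic fun c : Coeff A => ∀ x, ¬ IsSingularRoot A c x := by
  choose r hr using exists_polynomial_generic_simple_root hA
  have hgen := Generic.forall hr
  refine (hgen.and hgen.eventually).mono ?_
  rintro c ⟨hc, hc'⟩ x ⟨hx, hsing⟩
  refine det_jacobian_ne_zero hA hx ?_ (fun j => (hc j x hx).2) hsing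
  exact hc'.mono fun c' h y hy j => (h j y hy).1

end GenericRegularity

section ProperLocalHomeomorphism

variable {E X : Type*} [TopologicalSpace E] {f : E → X} {W : Set X}

lemma isLocallyInjective_restrictPreimage (h : ∀ e, f e ∈ W → ∃ U ∈ 𝓝 e, U.InjOn f) :
    IsLocallyInjective (W.restrictPreimage f) := by
  rw [isLocallyInjective_iff_nhds]
  intro p
  obtain ⟨U, hU, hinj⟩ := h p p.2
  exact ⟨Subtype.val ⁻¹' U, continuous_subtype_val.continuousAt.preimage_mem_nhds hU,
    fun q hq q' hq' hqq' => Subtype.ext (hinj hq hq' (congrArg Subtype.val hqq'))⟩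

variable [TopologicalSpace X]

lemma isCoveringMap_of_isProperMap_of_isLocalHomeomorph [T2Space E]
    (hf : IsProperMap f) (hloc : IsLocalHomeomorph f) : IsCoveringMap f := by
  rw [isCoveringMap_iff_isCoveringMapOn_univ]
  refine hf.isClosedMap.isCoveringMapOn_of_isLocalHomeomorphOn (fun x _ => ?_)
    hloc.isLocalHomeomorphOn
  exact (hf.isCompact_preimage isCompact_singleton).finite
    (.of_openPartialHomeomorph f subset_rfl fun e _ => (hloc e).imp fun φ hφ => ⟨hφ.1, hφ.2.symm⟩)

lemma isLocalHomeomorph_of_isOpenMap_of_isLocallyInjective (hf : Continuous f)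
    (hopen : IsOpenMap f) (hinj : IsLocallyInjective f) : IsLocalHomeomorph f := by
  rw [isLocalHomeomorph_iff_isOpenEmbedding_restrict]
  intro e
  obtain ⟨U, hU, heU, hUinj⟩ := hinj e
  exact ⟨U, hU.mem_nhds heU, .of_continuous_injective_isOpenMap (hf.comp continuous_subtype_val)
    hUinj.injective (hopen.comp hU.isOpenMap_subtype_val)⟩

lemma isOpenMap_restrictPreimage (h : ∀ e, f e ∈ W → 𝓝 (f e) ≤ map f (𝓝 e)) :
    IsOpenMap (W.restrictPreimage f) := by
  refine IsOpenMap.of_nhds_le fun p S hS => ?_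
  obtain ⟨N, hN, hNS⟩ := mem_nhds_subtype _ _ _ |>.1 (mem_map.1 hS)
  refine mem_nhds_subtype _ _ _ |>.2 ⟨f '' N, h p p.2 (image_mem_map hN), ?_⟩
  rintro w ⟨e, he, hew⟩
  have hw : W.restrictPreimage f ⟨e, show f e ∈ W from hew ▸ w.2⟩ = w := Subtype.ext hew
  exact hw ▸ hNS he

lemma isProperMap_restrictPreimage_snd {Y : Type*} [TopologicalSpace Y] {Z : Set (Y × X)}
    (hZ : IsClosed Z) (hW : ∀ x ∈ W, ∃ K : Set Y, IsCompact K ∧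
      ∀ᶠ x' in 𝓝 x, ∀ y, (y, x') ∈ Z → y ∈ K) :
    IsProperMap (W.restrictPreimage fun p : Z => p.1.2) := by
  have hcont : Continuous fun p : Z => p.1.2 := continuous_snd.comp continuous_subtype_val
  refine isProperMap_iff_ultrafilter.2 ⟨hcont.restrictPreimage, fun 𝒰 w h𝒰 => ?_⟩
  obtain ⟨K, hK, hKZ⟩ := hW w w.2
  let e : (fun p : Z => p.1.2) ⁻¹' W → Y × X := fun p => p.1.1
  have he : IsEmbedding e := IsEmbedding.subtypeVal.comp IsEmbedding.subtypeVal
  have hsnd : Tendsto (fun p => (e p).2) 𝒰 (𝓝 (w : X)) :=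
    continuous_subtype_val.continuousAt.tendsto.comp h𝒰
  obtain ⟨y, -, hy⟩ := hK.ultrafilter_le_nhds' (𝒰.map fun p => (e p).1)
    ((hsnd.eventually hKZ).mono fun p hp => hp _ p.1.2)
  have hlim : Tendsto e 𝒰 (𝓝 (y, (w : X))) := Tendsto.prodMk_nhds hy hsnd
  have hyw : (y, (w : X)) ∈ Z := hZ.mem_of_tendsto hlim (Eventually.of_forall fun p => p.1.2)
  exact ⟨⟨⟨_, hyw⟩, w.2⟩, rfl, he.isInducing.tendsto_nhds_iff.2 hlim⟩

end ProperLocalHomeomorphism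

section Covering

variable {n : ℕ} {A : Fin n → Finset (Fin n → ℤ)}

lemma isCompact_units_norm_le (M : ℝ) : IsCompact {u : ℂˣ | ‖(u : ℂ)‖ ≤ M ∧ ‖(u : ℂ)⁻¹‖ ≤ M} := by
  have hbox : IsCompact (Metric.closedBall (0 : ℂ) M ×ˢ
      (MulOpposite.opHomeomorph.symm ⁻¹' Metric.closedBall (0 : ℂ) M)) :=
    (isCompact_closedBall _ _).prod
      (MulOpposite.opHomeomorph.symm.isCompact_preimage.2 (isCompact_closedBall _ _))
  convert! Units.isClosedEmbedding_embedProduct.isCompact_preimage hbox using 1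
  ext u
  simp [Units.embedProduct]

lemma continuous_mono (a : Fin n → ℤ) : Continuous (mono a) := by
  have hmono : mono a = fun x : Torus n => ((∏ j, x j ^ a j : ℂˣ) : ℂ) := by
    ext x
    simp [mono]
  rw [hmono]
  exact Units.continuous_val.comp (continuous_finsetProd _ fun j _ => (continuous_apply j).zpow _)

lemma isClosed_incidence : IsClosed (incidence A) := by
  simp only [incidence, IsRoot, Set.ofPred_forall, evalAt]
  refine isClosed_iInter fun i => isClosed_eq (continuous_finsetSum _ fun a _ => ?_)
    continuous_const
  exact ((continuous_apply _).comp continuous_snd).mul ((continuous_mono _).comp continuous_fst)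

lemma isInvertible_of_injective {𝕜 E : Type*} [NontriviallyNormedField 𝕜] [CompleteSpace 𝕜]
    [NormedAddCommGroup E] [NormedSpace 𝕜 E] [FiniteDimensional 𝕜 E] {T : E →L[𝕜] E}
    (hT : Function.Injective T) : T.IsInvertible :=
  ⟨(LinearEquiv.ofInjectiveEndo T.toLinearMap hT).toContinuousLinearEquiv, rfl⟩

lemma fderiv_evalAt_mul_torusExp (c : Coeff A) (x : Torus n) (w : Fin n → ℂ) :
    fderiv ℂ (fun p : Coeff A × (Fin n → ℂ) => fun i => evalAt A p.1 i (x * torusExp p.2)) (c, 0)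
      (0, w) = (jacobian A c x).mulVec fun j => x j * w j := by
  have hline : HasDerivAt (fun s : ℂ => (c, s • w)) (0, w) 0 := by
    simpa using (hasDerivAt_const (0 : ℂ) c).prodMk ((hasDerivAt_id (0 : ℂ)).smul_const w)
  have hF := (((contDiff_evalAt_mul_torusExp (A := A) x).differentiable one_ne_zero)
    (c, 0)).hasFDerivAt
  exact (hF.comp_hasDerivAt_of_eq 0 hline (by simp)).unique
    (hasDerivAt_pi.2 fun i => hasDerivAt_evalAt_mul_torusExp c i x w)

lemma injective_fderiv_evalAt_comp_inr {c : Coeff A} {x : Torus n}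
    (hdet : (jacobian A c x).det ≠ 0) : Function.Injective
      (fderiv ℂ (fun p : Coeff A × (Fin n → ℂ) => fun i => evalAt A p.1 i (x * torusExp p.2)) (c, 0)
        ∘L .inr ℂ (Coeff A) (Fin n → ℂ)) := by
  refine (injective_iff_map_eq_zero _).2 fun w hw => funext fun j => ?_
  rw [ContinuousLinearMap.comp_apply, ContinuousLinearMap.inr_apply,
    fderiv_evalAt_mul_torusExp] at hw
  simpa using congrFun (Matrix.eq_zero_of_mulVec_eq_zero hdet hw) j

lemma tendsto_log_div (x : Torus n) :
    Tendsto (fun y : Torus n => fun j => Complex.log ((y / x) j)) (𝓝 x) (𝓝 0) := by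
  have hquot : Tendsto (fun y : Torus n => y / x) (𝓝 x) (𝓝 1) := by
    simpa using (tendsto_id (x := 𝓝 x)).div_const' x
  refine tendsto_pi_nhds.2 fun j => ?_
  have hcoord : Tendsto (fun y : Torus n => (((y / x) j : ℂˣ) : ℂ)) (𝓝 x) (𝓝 1) :=
    (Units.continuous_val.tendsto 1).comp (tendsto_pi_nhds.1 hquot j)
  simpa using hcoord.clog Complex.one_mem_slitPlane

/-- The implicit function theorem in the coordinates `w ↦ x * torusExp w`. -/
lemma exists_root_section {c : Coeff A} {x : Torus n} (hx : IsRoot A c x)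
    (hdet : (jacobian A c x).det ≠ 0) :
    ∃ ψ : Coeff A → Torus n, Tendsto ψ (𝓝 c) (𝓝 x) ∧ (∀ᶠ c' in 𝓝 c, IsRoot A c' (ψ c')) ∧
      ∀ᶠ q in 𝓝 (x, c), IsRoot A q.2 q.1 → ψ q.2 = q.1 := by
  let F : Coeff A × (Fin n → ℂ) → Fin n → ℂ := fun p i => evalAt A p.1 i (x * torusExp p.2)
  have hF : HasStrictFDerivAt F (fderiv ℂ F (c, 0)) (c, 0) :=
    (contDiff_evalAt_mul_torusExp x).contDiffAt.hasStrictFDerivAt one_ne_zero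
  have hF₀ : F (c, 0) = 0 := by
    funext i
    simpa [F, torusExp_zero] using hx i
  have hpartial : (fderiv ℂ F (c, 0) ∘L .inr ℂ (Coeff A) (Fin n → ℂ)).IsInvertible :=
    isInvertible_of_injective (injective_fderiv_evalAt_comp_inr hdet)
  let φ := hF.implicitFunctionOfProdDomain hpartial
  have hφ : Tendsto φ (𝓝 c) (𝓝 0) := hF.tendsto_implicitFunctionOfProdDomain hpartial
  have htorus : Tendsto (fun w => x * torusExp w) (𝓝 0) (𝓝 x) := by
    simpa [torusExp_zero] using! ((continuous_const.mul continuous_torusExp).tendsto 0 :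
      Tendsto (fun w => x * torusExp w) (𝓝 0) _)
  refine ⟨fun c' => x * torusExp (φ c'), htorus.comp hφ, ?_, ?_⟩
  · filter_upwards [hF.eventually_apply_implicitFunctionOfProdDomain hpartial] with c' hc'
    exact congrFun (hc'.trans hF₀)
  · have hlog : Tendsto (fun q : Torus n × Coeff A => (q.2, fun j => Complex.log ((q.1 / x) j)))
        (𝓝 (x, c)) (𝓝 (c, 0)) :=
      continuousAt_snd.tendsto.prodMk_nhds ((tendsto_log_div x).comp continuousAt_fst)
    filter_upwards [hlog.eventually
      (hF.eventually_apply_eq_iff_implicitFunctionOfProdDomain hpartial)] with q hq hroot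
    have hφq : φ q.2 = fun j => Complex.log ((q.1 / x) j) := hq.1 <| by
      rw [hF₀]
      funext i
      simpa only [F, torusExp_log, mul_div_cancel, Pi.zero_apply] using hroot i
    rw [hφq, torusExp_log, mul_div_cancel]

lemma continuous_proj : Continuous (proj A) :=
  continuous_snd.comp continuous_subtype_val

lemma nhds_proj_le_map {p : incidence A} (hp : ¬ IsSingularRoot A p.1.2 p.1.1) :
    𝓝 (proj A p) ≤ map (proj A) (𝓝 p) := by
  obtain ⟨ψ, hψ, hroot, -⟩ := exists_root_section p.2 fun h => hp ⟨p.2, h⟩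
  have hlift : Tendsto (fun c' => (ψ c', c')) (𝓝 p.1.2) (𝓝 p.1) := hψ.prodMk_nhds tendsto_id
  intro S hS
  obtain ⟨N, hN, hNS⟩ := mem_nhds_subtype _ _ _ |>.1 (mem_map.1 hS)
  filter_upwards [hlift.eventually hN, hroot] with c' hc' hroot'
  exact hNS (a := ⟨(ψ c', c'), hroot'⟩) hc'

lemma exists_mem_nhds_injOn_proj {p : incidence A} (hp : ¬ IsSingularRoot A p.1.2 p.1.1) :
    ∃ U ∈ 𝓝 p, U.InjOn (proj A) := by
  obtain ⟨ψ, -, -, hψ⟩ := exists_root_section p.2 fun h => hp ⟨p.2, h⟩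
  refine ⟨_, continuous_subtype_val.continuousAt.eventually hψ, fun q hq q' hq' hqq' => ?_⟩
  refine Subtype.ext (Prod.ext ?_ hqq')
  rw [← hq q.2, ← hq' q'.2]
  exact congrArg ψ hqq'

lemma isCoveringMapOn_proj {W : Set (Coeff A)} (hW : IsOpen W)
    (hsing : ∀ c ∈ W, ∀ x, ¬ IsSingularRoot A c x)
    (hbdd : ∀ c ∈ W, ∃ M : ℝ, ∀ᶠ c' in 𝓝 c, ∀ x, IsRoot A c' x →
      ∀ j, ‖(x j : ℂ)‖ ≤ M ∧ ‖(x j : ℂ)⁻¹‖ ≤ M) :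
    IsCoveringMapOn (proj A) W := by
  refine IsCoveringMapOn.of_isCoveringMap_restrictPreimage _ hW (hW.preimage continuous_proj)
    (isCoveringMap_of_isProperMap_of_isLocalHomeomorph ?_ ?_)
  · refine isProperMap_restrictPreimage_snd isClosed_incidence fun c hc => ?_
    obtain ⟨M, hM⟩ := hbdd c hc
    exact ⟨_, isCompact_univ_pi fun _ => isCompact_units_norm_le M,
      hM.mono fun c' h x hx j _ => h x hx j⟩
  · exact isLocalHomeomorph_of_isOpenMap_of_isLocallyInjective continuous_proj.restrictPreimage
      (isOpenMap_restrictPreimage fun p hp => nhds_proj_le_map (hsing _ hp _))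
      (isLocallyInjective_restrictPreimage fun p hp => exists_mem_nhds_injOn_proj (hsing _ hp _))

end Covering

section CountableComplement

variable {U : Set ℂ}

lemma countable_inter_preimage_zero {E : Type*} [NormedAddCommGroup E] [NormedSpace ℂ E] {f : ℂ → E}
    {s : ℂ} (hU : IsConnected U) (hf : AnalyticOnNhd ℂ f U) (hs : s ∈ U) (hfs : f s ≠ 0) :
    (f ⁻¹' {0} ∩ U).Countable := by
  have hdiscrete : IsDiscrete (f ⁻¹' {0} ∩ U) :=
    isDiscrete_of_codiscreteWithin (hf.preimage_zero_mem_codiscreteWithin hfs hs hU)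
  have := hdiscrete.to_subtype
  exact TopologicalSpace.separableSpace_iff_countable.1 inferInstance

lemma isPathConnected_of_countable_compl (hU : Uᶜ.Countable) : IsPathConnected U := by
  have hrank : 1 < Module.rank ℝ ℂ := Complex.rank_real_complex ▸ Nat.one_lt_ofNat
  simpa using hU.isPathConnected_compl_of_one_lt_rank hrank

lemma countable_compl_inter_ne_zero {f : ℂ → ℂ} {s : ℂ} (hU : Uᶜ.Countable)
    (hf : AnalyticOnNhd ℂ f U) (hs : s ∈ U) (hfs : f s ≠ 0) : (U ∩ {z | f z ≠ 0})ᶜ.Countable := by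
  refine (hU.union (countable_inter_preimage_zero
    (isPathConnected_of_countable_compl hU).isConnected hf hs hfs)).mono fun z hz => ?_
  by_cases hzU : z ∈ U
  · exact Or.inr ⟨by_contra fun hfz => hz ⟨hzU, hfz⟩, hzU⟩
  · exact Or.inl hzU

lemma joinedIn_ne_zero {D F : ℂ → ℂ} (hD : Differentiable ℂ D)
    (hF : DifferentiableOn ℂ F {z | D z ≠ 0}) {s t : ℂ} (hDs : D s ≠ 0) (hFs : F s ≠ 0)
    (hDt : D t ≠ 0) (hFt : F t ≠ 0) : JoinedIn ({z | D z ≠ 0} ∩ {z | F z ≠ 0}) s t := by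
  have hopen : IsOpen {z | D z ≠ 0} := isOpen_ne_fun hD.continuous continuous_const
  have hcountable : {z | D z ≠ 0}ᶜ.Countable := by
    simpa using countable_compl_inter_ne_zero (U := Set.univ) (by simp)
      (hD.differentiableOn.analyticOnNhd isOpen_univ) (Set.mem_univ s) hDs
  exact (isPathConnected_of_countable_compl (countable_compl_inter_ne_zero hcountable
    (hF.analyticOnNhd hopen) hDs hFs)).joinedIn s ⟨hDs, hFs⟩ t ⟨hDt, hFt⟩

end CountableComplement

section Wedge

variable {k V W W' : Type*} [Field k] [AddCommGroup V] [Module k V] [AddCommGroup W] [Module k W]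
  [AddCommGroup W'] [Module k W']

lemma exists_apply_ne_zero_and_apply_ne_zero {φ : V →ₗ[k] W} {ψ : V →ₗ[k] W'} (hφ : φ ≠ 0)
    (hψ : ψ ≠ 0) : ∃ v, φ v ≠ 0 ∧ ψ v ≠ 0 := by
  obtain ⟨u, hu⟩ := DFunLike.ne_iff.1 hφ
  obtain ⟨v, hv⟩ := DFunLike.ne_iff.1 hψ
  by_cases hψu : ψ u = 0
  · by_cases hφv : φ v = 0
    · exact ⟨u + v, by simpa [hφv] using hu, by simpa [hψu] using hv⟩
    · exact ⟨v, hφv, hv⟩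
  · exact ⟨u, hu, hψu⟩

/-- The exterior product `φ ∧ ψ` of two linear forms, as a bilinear form. -/
def wedge (φ ψ : V →ₗ[k] k) : V →ₗ[k] V →ₗ[k] k :=
  φ.smulRight ψ - ψ.smulRight φ

lemma wedge_apply (φ ψ : V →ₗ[k] k) (g h : V) : wedge φ ψ g h = φ g * ψ h - ψ g * φ h := rfl

lemma exists_wedge_ne_zero {φ ψ φ' ψ' : V →ₗ[k] k} (hω : wedge φ ψ ≠ 0) (hω' : wedge φ' ψ' ≠ 0) :
    ∃ g h, wedge φ ψ g h ≠ 0 ∧ wedge φ' ψ' g h ≠ 0 := by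
  obtain ⟨g, hg, hg'⟩ := exists_apply_ne_zero_and_apply_ne_zero hω hω'
  exact ⟨g, exists_apply_ne_zero_and_apply_ne_zero hg hg'⟩

/-- The projection of `f` along the span of `g` and `h` to the common kernel of `φ` and `ψ`, by
Cramer's rule; it is meaningful if `wedge φ ψ g h ≠ 0`. -/
def projKer (φ ψ : V →ₗ[k] k) (g h f : V) : V :=
  f - (wedge φ ψ f h / wedge φ ψ g h) • g - (wedge φ ψ g f / wedge φ ψ g h) • h

variable {φ ψ : V →ₗ[k] k} {g h f : V}

lemma apply_left_projKer (hgh : wedge φ ψ g h ≠ 0) : φ (projKer φ ψ g h f) = 0 := by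
  simp only [projKer, map_sub, map_smul, smul_eq_mul]
  field_simp
  simp only [wedge_apply]
  ring

lemma apply_right_projKer (hgh : wedge φ ψ g h ≠ 0) : ψ (projKer φ ψ g h f) = 0 := by
  simp only [projKer, map_sub, map_smul, smul_eq_mul]
  field_simp
  simp only [wedge_apply]
  ring

lemma projKer_of_apply_eq_zero (hφ : φ f = 0) (hψ : ψ f = 0) : projKer φ ψ g h f = f := by
  simp [projKer, wedge_apply, hφ, hψ]

end Wedge

section TorusLine

variable {n : ℕ}

/-- A holomorphic curve in the torus with value `x` at `0` and `y` at `1`: the exponential of a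
line. -/
noncomputable def torusLine (x y : Torus n) (s : ℂ) : Torus n :=
  torusExp (AffineMap.lineMap (fun j => Complex.log (x j)) (fun j => Complex.log (y j)) s)

variable (x y : Torus n)

lemma torusLine_zero : torusLine x y 0 = x := by
  rw [torusLine, AffineMap.lineMap_apply_zero, torusExp_log]

lemma torusLine_one : torusLine x y 1 = y := by
  rw [torusLine, AffineMap.lineMap_apply_one, torusExp_log]

lemma continuous_torusLine : Continuous (torusLine x y) :=
  continuous_torusExp.comp AffineMap.lineMap_continuous

lemma differentiable_mono_torusLine (a : Fin n → ℤ) :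
    Differentiable ℂ fun s => mono a (torusLine x y s) := by
  simp only [mono, torusLine, torusExp, Units.val_mk0, ← Complex.exp_int_mul, ← Complex.exp_sum,
    AffineMap.lineMap_apply_module, Pi.add_apply, Pi.smul_apply, smul_eq_mul]
  fun_prop

end TorusLine

section Loops

variable {n : ℕ} {A : Fin n → Finset (Fin n → ℤ)}

/-- Evaluation at `x` of Laurent polynomials supported at `S`, as a linear form in the
coefficients. -/
noncomputable def evalForm (S : Finset (Fin n → ℤ)) (x : Torus n) :
    ({a // a ∈ S} → ℂ) →ₗ[ℂ] ℂ :=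
  Fintype.linearCombination ℂ fun a => mono a.1 x

lemma wedge_evalForm_ne_zero {x y : Torus n} (h : constantIndices A (x / y) = ∅) (i : Fin n) :
    wedge (evalForm (A i) x) (evalForm (A i) y) ≠ 0 := by
  intro hzero
  refine Finset.notMem_empty i (h ▸ mem_constantIndices.2 fun a ha b hb => ?_)
  have hab := LinearMap.congr_fun₂ hzero (Pi.single ⟨a, ha⟩ 1) (Pi.single ⟨b, hb⟩ 1)
  simp only [wedge_apply, evalForm, Fintype.linearCombination_apply_single, one_smul,
    LinearMap.zero_apply, sub_eq_zero, mono_eq_coe_laurentMonomial] at hab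
  rw [laurentMonomial_div, laurentMonomial_div, div_eq_div_iff_mul_eq_mul]
  exact_mod_cast hab.trans (mul_comm _ _)

/-- The system `f` modified along `g` and `h` so as to have the roots `x` and `y`. -/
noncomputable def interpolatePair (g h : ∀ i, {a // a ∈ A i} → ℂ) (f : Coeff A) (x y : Torus n) :
    Coeff A :=
  fun q => projKer (evalForm (A q.1) x) (evalForm (A q.1) y) (g q.1) (h q.1)
    (fun a => f ⟨q.1, a⟩) q.2

variable {g h : ∀ i, {a // a ∈ A i} → ℂ} {f : Coeff A} {x y : Torus n}

lemma isRoot_interpolatePair_left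
    (hgh : ∀ i, wedge (evalForm (A i) x) (evalForm (A i) y) (g i) (h i) ≠ 0) :
    IsRoot A (interpolatePair g h f x y) x :=
  fun i => apply_left_projKer (hgh i)

lemma isRoot_interpolatePair_right
    (hgh : ∀ i, wedge (evalForm (A i) x) (evalForm (A i) y) (g i) (h i) ≠ 0) :
    IsRoot A (interpolatePair g h f x y) y :=
  fun i => apply_right_projKer (hgh i)

lemma interpolatePair_of_isRoot (hx : IsRoot A f x) (hy : IsRoot A f y) :
    interpolatePair g h f x y = f :=
  funext fun q => congrFun (projKer_of_apply_eq_zero (hx q.1) (hy q.1)) q.2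

lemma differentiable_wedge_evalForm_torusLine {S : Finset (Fin n → ℤ)} (g h : {a // a ∈ S} → ℂ)
    (x x' y y' : Torus n) : Differentiable ℂ fun s =>
      wedge (evalForm S (torusLine x x' s)) (evalForm S (torusLine y y' s)) g h := by
  have hmono := fun x x' : Torus n => differentiable_mono_torusLine x x'
  simp only [wedge_apply, evalForm, Fintype.linearCombination_apply, smul_eq_mul]
  fun_prop

variable {x' y' : Torus n}

lemma differentiableOn_interpolatePair_torusLine {U : Set ℂ} (hU : ∀ s ∈ U, ∀ i,
      wedge (evalForm (A i) (torusLine x x' s)) (evalForm (A i) (torusLine y y' s))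
        (g i) (h i) ≠ 0) : DifferentiableOn ℂ
      (fun s => interpolatePair g h f (torusLine x x' s) (torusLine y y' s)) U := by
  refine differentiableOn_pi.2 fun q => ?_
  have hwedge := fun u v : {a // a ∈ A q.1} → ℂ =>
    (differentiable_wedge_evalForm_torusLine u v x x' y y').differentiableOn (s := U)
  simp only [interpolatePair, projKer, Pi.sub_apply, Pi.smul_apply, smul_eq_mul]
  exact ((differentiableOn_const _).fun_sub
    (((hwedge _ _).fun_div (hwedge _ _) fun s hs => hU s hs _).mul_const _)).fun_sub
    (((hwedge _ _).fun_div (hwedge _ _) fun s hs => hU s hs _).mul_const _)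

/-- `δ` lifts the path `γ` of systems to a path of roots passing through `x` at time `a`. -/
def IsRootLift (A : Fin n → Finset (Fin n → ℤ)) (γ : unitInterval → Coeff A) (a : unitInterval)
    (x : Torus n) (δ : unitInterval → Torus n) : Prop :=
  Continuous δ ∧ δ a = x ∧ ∀ t, IsRoot A (γ t) (δ t)

/-- Move the two roots along holomorphic curves and interpolate the system accordingly: the
parameters `s` at which this fails or yields an excluded system are isolated. -/
lemma exists_isLoop_isRootLift {Q : MvPolynomial (CIdx A) ℂ} (hf : MvPolynomial.eval f Q ≠ 0)
    (hx : IsRoot A f x) (hy : IsRoot A f y) (hx' : IsRoot A f x') (hy' : IsRoot A f y')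
    (hxy : constantIndices A (x / y) = ∅) (hxy' : constantIndices A (x' / y') = ∅) :
    ∃ γ, IsLoop A {c | MvPolynomial.eval c Q = 0} f γ ∧
      (∃ δ, IsRootLift A γ 0 x δ ∧ δ 1 = x') ∧ ∃ ε, IsRootLift A γ 0 y ε ∧ ε 1 = y' := by
  choose g h hgh hgh' using fun i =>
    exists_wedge_ne_zero (wedge_evalForm_ne_zero hxy i) (wedge_evalForm_ne_zero hxy' i)
  let D : ℂ → ℂ := fun s => ∏ i, wedge (evalForm (A i) (torusLine x x' s))
    (evalForm (A i) (torusLine y y' s)) (g i) (h i)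
  let c : ℂ → Coeff A := fun s => interpolatePair g h f (torusLine x x' s) (torusLine y y' s)
  have hD : Differentiable ℂ D := Differentiable.fun_finsetProd fun i _ =>
    differentiable_wedge_evalForm_torusLine (g i) (h i) x x' y y'
  have hwedge : ∀ s ∈ {s | D s ≠ 0}, ∀ i, wedge (evalForm (A i) (torusLine x x' s))
      (evalForm (A i) (torusLine y y' s)) (g i) (h i) ≠ 0 := fun s hs i =>
    Finset.prod_ne_zero_iff.1 hs i (Finset.mem_univ i)
  have hc : DifferentiableOn ℂ c {s | D s ≠ 0} := differentiableOn_interpolatePair_torusLine hwedge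
  have hQc : DifferentiableOn ℂ (fun s => MvPolynomial.eval (c s) Q) {s | D s ≠ 0} :=
    (AnalyticOnNhd.eval_mvPolynomial Q).differentiableOn.comp hc fun s _ => Set.mem_univ _
  have hc₀ : c 0 = f := by
    simp only [c, torusLine_zero, interpolatePair_of_isRoot hx hy]
  have hc₁ : c 1 = f := by
    simp only [c, torusLine_one, interpolatePair_of_isRoot hx' hy']
  have hD₀ : D 0 ≠ 0 := by
    simpa only [D, torusLine_zero, Finset.prod_ne_zero_iff] using fun i _ => hgh i
  have hD₁ : D 1 ≠ 0 := by
    simpa only [D, torusLine_one, Finset.prod_ne_zero_iff] using fun i _ => hgh' i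
  obtain ⟨p, hp⟩ := joinedIn_ne_zero hD hQc hD₀ (by rwa [hc₀]) hD₁ (by rwa [hc₁])
  refine ⟨fun t => c (p t), ⟨hc.continuousOn.comp_continuous p.continuous fun t => (hp t).1,
    fun t => (hp t).2, by simp [hc₀], by simp [hc₁]⟩,
    ⟨fun t => torusLine x x' (p t), ⟨(continuous_torusLine x x').comp p.continuous,
      by simp [torusLine_zero], fun t => isRoot_interpolatePair_left (hwedge _ (hp t).1)⟩,
      by simp [torusLine_one]⟩,
    ⟨fun t => torusLine y y' (p t), ⟨(continuous_torusLine y y').comp p.continuous,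
      by simp [torusLine_zero], fun t => isRoot_interpolatePair_right (hwedge _ (hp t).1)⟩,
      by simp [torusLine_one]⟩⟩

end Loops

section Lifting

variable {n : ℕ} {A : Fin n → Finset (Fin n → ℤ)} {B : Set (Coeff A)} {f : Coeff A}
  {γ : unitInterval → Coeff A}

lemma existsUnique_isRootLift (hcov : IsCoveringMapOn (proj A) Bᶜ) (hγ : IsLoop A B f γ)
    (a : unitInterval) {x : Torus n} (hx : IsRoot A (γ a) x) :
    ∃! δ, IsRootLift A γ a x δ := by
  have : ContractibleSpace unitInterval :=
    (convex_Icc (0 : ℝ) 1).contractibleSpace ⟨0, by simp⟩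
  have : LocallyPathConnectedSpace unitInterval :=
    (isQuotientMap_projIcc (h := zero_le_one (α := ℝ))).locallyPathConnectedSpace
  obtain ⟨F, ⟨hFa, hF⟩, huniq⟩ := hcov.existsUnique_continuousMap_lifts (f := ⟨γ, hγ.1⟩)
    (a₀ := a) (e₀ := (⟨(x, γ a), hx⟩ : incidence A)) rfl hγ.2.1
  refine ⟨fun t => (F t).1.1, ⟨by fun_prop, by simp [hFa], fun t => ?_⟩, ?_⟩
  · have hFt : (F t).1.2 = γ t := congrFun hF t
    exact hFt ▸ (F t).2
  · rintro δ ⟨hδ, hδa, hroot⟩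
    have hδF := huniq ⟨fun t => ⟨(δ t, γ t), hroot t⟩, (hδ.prodMk hγ.1).subtype_mk _⟩
      ⟨Subtype.ext (Prod.ext hδa rfl), rfl⟩
    funext t
    exact congrArg (fun G : C(unitInterval, incidence A) => (G t).1.1) hδF

lemma exists_perm_induces (hcov : IsCoveringMapOn (proj A) Bᶜ) (hγ : IsLoop A B f γ) :
    ∃ σ : Equiv.Perm (RootSet A f), Induces A γ f σ := by
  obtain ⟨-, -, h₀, h₁⟩ := id hγ
  choose δ hδ using fun x : RootSet A f =>
    (existsUnique_isRootLift hcov hγ 0 (h₀.symm ▸ x.2 : IsRoot A (γ 0) x.1)).exists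
  let τ : RootSet A f → RootSet A f := fun x => ⟨δ x 1, h₁ ▸ (hδ x).2.2 1⟩
  have hinj : Function.Injective τ := by
    intro x y hxy
    have hval : δ x 1 = δ y 1 := congrArg Subtype.val hxy
    have hδxy := (existsUnique_isRootLift hcov hγ 1 ((hδ y).2.2 1)).unique
      ⟨(hδ x).1, hval, (hδ x).2.2⟩ ⟨(hδ y).1, rfl, (hδ y).2.2⟩
    exact Subtype.ext (by rw [← (hδ x).2.1, ← (hδ y).2.1, hδxy])
  have hsurj : Function.Surjective τ := by
    intro y
    obtain ⟨ε, hε, hε₁, hroot⟩ := (existsUnique_isRootLift hcov hγ 1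
      (h₁.symm ▸ y.2 : IsRoot A (γ 1) y.1)).exists
    let x : RootSet A f := ⟨ε 0, h₀ ▸ hroot 0⟩
    have hδε := (existsUnique_isRootLift hcov hγ 0 (hroot 0)).unique (hδ x) ⟨hε, rfl, hroot⟩
    exact ⟨x, Subtype.ext ((congrFun hδε 1).trans hε₁)⟩
  exact ⟨Equiv.ofBijective τ ⟨hinj, hsurj⟩,
    fun x => ⟨δ x, (hδ x).1, (hδ x).2.1, (hδ x).2.2, rfl⟩⟩

lemma Induces.apply_eq {σ : RootSet A f → RootSet A f} (hσ : Induces A γ f σ)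
    (hcov : IsCoveringMapOn (proj A) Bᶜ) (hγ : IsLoop A B f γ) {x x' : RootSet A f}
    (hlift : ∃ δ, IsRootLift A γ 0 x.1 δ ∧ δ 1 = x'.1) : σ x = x' := by
  obtain ⟨δ, hδ, hδ₁⟩ := hlift
  obtain ⟨ε, hε, hε₀, hroot, hε₁⟩ := hσ x
  have hεδ := (existsUnique_isRootLift hcov hγ 0 (hγ.2.2.1 ▸ x.2)).unique ⟨hε, hε₀, hroot⟩ hδ
  exact Subtype.ext (by rw [← hε₁, hεδ, hδ₁])

end Lifting

/-- Theorem 1.23: for a reduced irreducible tuple `A`, the monodromy group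
`G_A` is doubly transitive. -/
theorem monodromy_doubly_transitive {n : ℕ} (A : Fin n → Finset (Fin n → ℤ))
    (hred : IsReducedTuple A) (hirr : IsIrreducibleTuple A) :
    ∃ B : Set (Coeff A), IsAlgebraicSet B ∧ B ≠ Set.univ ∧
      IsCoveringMapOn (proj A) Bᶜ ∧
      ∀ f : Coeff A, f ∉ B →
        ∀ x y x' y' : RootSet A f, x ≠ y → x' ≠ y' →
          ∃ γ : unitInterval → Coeff A, IsLoop A B f γ ∧
            ∃ σ : Equiv.Perm (RootSet A f), Induces A γ f σ ∧ σ x = x' ∧ σ y = y' := by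
  have hA := support_nonempty hred hirr
  obtain ⟨Q, hQ, hgeneric⟩ := (generic_constantIndices_eq_empty hred hirr).and
    ((generic_not_isSingularRoot hA).and (generic_exists_eventually_norm_le hA))
  have hopen : IsOpen {c : Coeff A | MvPolynomial.eval c Q = 0}ᶜ :=
    isOpen_ne_fun (MvPolynomial.continuous_eval Q) continuous_const
  have hcov : IsCoveringMapOn (proj A) {c | MvPolynomial.eval c Q = 0}ᶜ :=
    isCoveringMapOn_proj hopen (fun c hc => (hgeneric c hc).2.1) fun c hc => (hgeneric c hc).2.2
  refine ⟨_, ⟨{Q}, by simp⟩, fun huniv => hQ (MvPolynomial.funext fun c => ?_), hcov, ?_⟩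
  · simpa using! huniv.ge (Set.mem_univ c)
  intro f hf x y x' y' hxy hxy'
  have hsep := (hgeneric f hf).1
  obtain ⟨γ, hγ, hx, hy⟩ := exists_isLoop_isRootLift hf x.2 y.2 x'.2 y'.2
    (hsep _ _ x.2 y.2 (Subtype.coe_ne_coe.2 hxy)) (hsep _ _ x'.2 y'.2 (Subtype.coe_ne_coe.2 hxy'))
  obtain ⟨σ, hσ⟩ := exists_perm_induces hcov hγ
  exact ⟨γ, hγ, σ, hσ, hσ.apply_eq hcov hγ hx, hσ.apply_eq hcov hγ hy⟩

end Esterov
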